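/- Laplace transform of the Riesz distributions: Let k > 0 and let R be a family of type-A Riesz distributions. Let μ ∈ ℂ and z ∈ ℂⁿ with Re z_i > 0 for all i. Then for every Schwartz function ψ on ℝⁿ that coincides with x ↦ E_k^A(x, −z) on some open neighborhood of the closed orthant [0,∞)ⁿ, one has ⟨R_μ, ψ⟩ = ∏_{j=1}^n z_j^{−μ}, where ζ ↦ ζ^{−μ} is the principal branch of the power function on ℂ ∖ (−∞,0]. -/

import Mathlib

/-!
The formula is first proved for real `m = s + 1 + k(n - 1)` with `s > 0`, where `R_m` is given by
an integral, and then extended to all `μ` by the identity theorem, both sides being entire.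

For such `m`, put `h(c) = ∫ ψ(x) e^{-c(x_1+⋯+x_n)} D(x)^s ω_k(x) dx` over the positive orthant. On
the orthant `T_i ψ = -z_i ψ` (`eigen_of_eqOn`). Since `T_i` is skew-adjoint for `ω_k`,
integration by parts against `x_i ψ` (`ibp`) gives `(z_i + c) ∫ x_i ψ ⋯ = m ∫ ψ ⋯`
(`moment_eq`). Summing over `i` yields `h'(c) = -m (∑_i 1/(z_i + c)) h(c)`, so that
`h(c) ∏ (z_i + c)^m` is constant (`laplace_mul_const`). As `c → 0` it tends to `h(0) ∏ z_i^m`; as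
`c → ∞`, rescaling `x` by `1/c` and `ψ(0) = 1` show that it tends to the Selberg–Laguerre
integral `SL n k s = ∫ e^{-(x_1+⋯+x_n)} D^s ω_k` (`laplace_density`).

It remains to see that this integral is the normalizing constant `d_n(k) Γ_n(m;k)` (`SL_eq`). The
same integration by parts applied to square-free monomials is Aomoto's recursion (`aomoto`), which
gives the functional equation `s ↦ s + 1` (`SL_succ`). With logarithmic convexity
(`SL_logconvex`) and the uniqueness argument of Bohr–Mollerup (`convex_uniq`), the integral is
proportional to `∏_j Γ(s + 1 + kj)`. The constant follows by induction on `n` from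
`SL (n + 1) k 0 = SL n k (2k)` (`SL_boundary`): integrating `∂_1` of the density at `s = 0` leaves
only the face `x_1 = 0`.

The density is not differentiable across `x_i = x_j` when `k` is small, and the individual
terms `2k / (x_i - x_j)` of its logarithmic derivative need not be integrable. Integration by parts
is therefore carried out for the weight `∏_{a ≠ b} ((x_a - x_b)² + ε)^{k/2}` (`ibp_eps`), the
singular terms are combined into difference quotients by symmetrization (`ibp_sym`), and only then
`ε → 0`.
-/

open MeasureTheory Finset

/-- The type-A rational Dunkl operator `T_i(k)` applied to `f` at `x`. -/
noncomputable def dunklOp (n : ℕ) (k : ℝ) (i : Fin n) (f : (Fin n → ℝ) → ℂ)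
    (x : Fin n → ℝ) : ℂ :=
  fderiv ℝ f x (Pi.single i 1) +
    (k : ℂ) * ∑ j ∈ Finset.univ.erase i,
      (f x - f (x ∘ Equiv.swap i j)) / ((x i : ℂ) - (x j : ℂ))

/-- `E` is the type-A Dunkl kernel with multiplicity `k`:  for each `z`, `x ↦ E x z` is the
unique real-analytic function on `ℝⁿ` with value `1` at `0` satisfying the Dunkl eigenvalue
equations `T_i(k) E(·,z) = z_i E(·,z)` at points with pairwise distinct coordinates; moreover
`z ↦ E x z` is entire. -/
structure IsDunklKernel (n : ℕ) (k : ℝ) (E : (Fin n → ℝ) → (Fin n → ℂ) → ℂ) : Prop where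
  analyticOn_fst : ∀ z, AnalyticOn ℝ (fun x => E x z) Set.univ
  eval_zero : ∀ z, E 0 z = 1
  eigen : ∀ z (i : Fin n) (x : Fin n → ℝ), Function.Injective x →
    dunklOp n k i (fun y => E y z) x = z i * E x z
  unique : ∀ z (f : (Fin n → ℝ) → ℂ), AnalyticOn ℝ f Set.univ → f 0 = 1 →
    (∀ (i : Fin n) (x : Fin n → ℝ), Function.Injective x →
      dunklOp n k i f x = z i * f x) → ∀ x, f x = E x z
  analyticOn_snd : ∀ x, AnalyticOn ℂ (fun z => E x z) Set.univ

/-- The type-A Dunkl weight `ω_k(x) = ∏_{i<j} |x_i - x_j|^{2k}`. -/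
noncomputable def wk (n : ℕ) (k : ℝ) (x : Fin n → ℝ) : ℝ :=
  ∏ i : Fin n, ∏ j ∈ Finset.Ioi i, |x i - x j| ^ (2 * k)

/-- The open positive orthant `ℝ₊ⁿ = (0,∞)ⁿ`. -/
def Rplus (n : ℕ) : Set (Fin n → ℝ) := {x | ∀ i, 0 < x i}

/-- The constant `d_n(k) = ∏_{j=1}^n Γ(1+jk)/Γ(1+k)`. -/
noncomputable def dnk (n : ℕ) (k : ℝ) : ℝ :=
  ∏ j ∈ Finset.range n, Real.Gamma (1 + (j + 1) * k) / Real.Gamma (1 + k)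

/-- The multivariable Gamma function `Γ_n(μ;k) = ∏_{j=1}^n Γ(μ - k(j-1))`. -/
noncomputable def Gammank (n : ℕ) (k : ℝ) (μ : ℂ) : ℂ :=
  ∏ j ∈ Finset.range n, Complex.Gamma (μ - ((k * (j : ℝ) : ℝ) : ℂ))

/-- A family of type-A Riesz distributions for multiplicity `k > 0`: a map `R : ℂ → 𝓢'(ℝⁿ)`
such that `μ ↦ ⟨R_μ, φ⟩` is entire for every Schwartz `φ`, and for `Re μ > μ₀ = k(n-1)`,
`⟨R_μ, φ⟩ = (d_n(k)Γ_n(μ;k))⁻¹ ∫_{ℝ₊ⁿ} φ(x) D(x)^{μ-μ₀-1} ω_k(x) dx`. -/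
def IsRieszFamily (n : ℕ) (k : ℝ)
    (R : ℂ → (SchwartzMap (Fin n → ℝ) ℂ →L[ℂ] ℂ)) : Prop :=
  (∀ φ : SchwartzMap (Fin n → ℝ) ℂ, Differentiable ℂ (fun μ => R μ φ)) ∧
  ∀ μ : ℂ, k * ((n : ℝ) - 1) < μ.re → ∀ φ : SchwartzMap (Fin n → ℝ) ℂ,
    R μ φ = ((dnk n k : ℂ) * Gammank n k μ)⁻¹ *
      ∫ x in Rplus n,
        φ x * (∏ i, (x i : ℂ) ^ (μ - ((k * ((n : ℝ) - 1) : ℝ) : ℂ) - 1)) * (wk n k x : ℂ)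

/-! ### The weights on the orthant -/

/-- The regularized Dunkl weight `∏_{a ≠ b} ((x_a - x_b)² + ε)^{k/2}`, a product over ordered pairs.
It is smooth for `ε > 0` and equals `wk` for `ε = 0`. -/
noncomputable def om (n : ℕ) (k ε : ℝ) (x : Fin n → ℝ) : ℝ :=
  ∏ a, ∏ b, if a = b then 1 else ((x a - x b) ^ 2 + ε) ^ (k / 2)

/-- The density `D(x)^s e^{-c(x_1+⋯+x_n)}` times the regularized Dunkl weight. -/
noncomputable def Wt (n : ℕ) (k s c ε : ℝ) (x : Fin n → ℝ) : ℝ :=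
  (∏ l, (x l) ^ s) * Real.exp (-c * ∑ l, x l) * om n k ε x

lemma om_zero_eq_wk (n : ℕ) (k : ℝ) (x : Fin n → ℝ) : om n k 0 x = wk n k x := by
  have h1 : ∀ a b : Fin n, ((x a - x b) ^ 2 + 0) ^ (k / 2) = |x a - x b| ^ k := by
    intro a b
    rw [add_zero, ← sq_abs, ← Real.rpow_natCast, ← Real.rpow_mul (abs_nonneg _)]
    congr 1
    push_cast
    ring
  have h2 : ∀ a b : Fin n, |x a - x b| ^ (2 * k) = |x a - x b| ^ k * |x b - x a| ^ k := by
    intro a b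
    rw [abs_sub_comm (x b), ← Real.mul_rpow (abs_nonneg _) (abs_nonneg _), ← sq,
      ← Real.rpow_natCast, ← Real.rpow_mul (abs_nonneg _)]
    norm_cast
  unfold om wk
  simp_rw [h1, h2]
  rw [Finset.prod_prod_Ioi_mul_eq_prod_prod_off_diag (fun a b => |x b - x a| ^ k)]
  refine Finset.prod_congr rfl fun a _ => ?_
  rw [← Finset.prod_compl_mul_prod {a}]
  simp only [Finset.prod_singleton, if_true, mul_one]
  refine Finset.prod_congr rfl fun b hb => ?_
  rw [if_neg (by simpa [eq_comm] using hb), abs_sub_comm]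

lemma om_perm (n : ℕ) (k ε : ℝ) (x : Fin n → ℝ) (σ : Equiv.Perm (Fin n)) :
    om n k ε (x ∘ σ) = om n k ε x := by
  unfold om
  rw [← Equiv.prod_comp σ (fun a => ∏ b, if a = b then 1 else ((x a - x b) ^ 2 + ε) ^ (k / 2))]
  refine Finset.prod_congr rfl fun a _ => ?_
  rw [← Equiv.prod_comp σ (fun b => if σ a = b then 1 else ((x (σ a) - x b) ^ 2 + ε) ^ (k / 2))]
  simp

lemma Wt_perm (n : ℕ) (k s c ε : ℝ) (x : Fin n → ℝ) (σ : Equiv.Perm (Fin n)) :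
    Wt n k s c ε (x ∘ σ) = Wt n k s c ε x := by
  unfold Wt
  rw [om_perm]
  simp only [Function.comp]
  rw [Equiv.prod_comp σ (fun l => x l ^ s), Equiv.sum_comp σ]

@[fun_prop]
lemma measurable_om (n : ℕ) (k ε : ℝ) : Measurable (om n k ε) := by
  unfold om
  refine Finset.measurable_prod _ fun a _ => Finset.measurable_prod _ fun b _ => ?_
  split_ifs <;> fun_prop

@[fun_prop]
lemma measurable_Wt (n : ℕ) (k s c ε : ℝ) : Measurable (Wt n k s c ε) := by
  unfold Wt
  fun_prop

lemma om_nonneg (n : ℕ) (k : ℝ) {ε : ℝ} (hε : 0 ≤ ε) (x : Fin n → ℝ) : 0 ≤ om n k ε x := by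
  unfold om
  refine Finset.prod_nonneg fun a _ => Finset.prod_nonneg fun b _ => ?_
  split_ifs
  · exact zero_le_one
  · positivity

lemma om_pos (n : ℕ) (k : ℝ) {ε : ℝ} (x : Fin n → ℝ) (h : 0 ≤ ε)
    (hx : 0 < ε ∨ Function.Injective x) : 0 < om n k ε x := by
  unfold om
  refine Finset.prod_pos fun a _ => Finset.prod_pos fun b _ => ?_
  split_ifs with hab
  · exact zero_lt_one
  · rcases hx with hx | hx
    · positivity
    · have : x a - x b ≠ 0 := sub_ne_zero.2 (fun h => hab (hx h))
      positivity

lemma Wt_nonneg (n : ℕ) (k s c : ℝ) {ε : ℝ} (hε : 0 ≤ ε) {x : Fin n → ℝ} (hx : x ∈ Rplus n) :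
    0 ≤ Wt n k s c ε x := by
  unfold Wt
  have := om_nonneg n k hε x
  have h2 : 0 ≤ ∏ l, x l ^ s := Finset.prod_nonneg fun l _ => Real.rpow_nonneg (hx l).le _
  positivity

lemma Rplus_eq_pi (n : ℕ) : Rplus n = Set.pi Set.univ (fun _ => Set.Ioi 0) := by
  ext x; simp [Rplus]

lemma measurableSet_Rplus (n : ℕ) : MeasurableSet (Rplus n) := by
  rw [Rplus_eq_pi]
  exact MeasurableSet.univ_pi fun _ => measurableSet_Ioi

lemma isOpen_Rplus (n : ℕ) : IsOpen (Rplus n) := by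
  rw [Rplus_eq_pi]
  exact isOpen_set_pi Set.finite_univ fun _ _ => isOpen_Ioi

lemma le_sum_of_Rplus {n : ℕ} {x : Fin n → ℝ} (hx : x ∈ Rplus n) (i : Fin n) :
    x i ≤ ∑ l, x l :=
  Finset.single_le_sum (f := x) (fun l _ => (hx l).le) (Finset.mem_univ i)

lemma sum_nonneg_of_Rplus {n : ℕ} {x : Fin n → ℝ} (hx : x ∈ Rplus n) : 0 ≤ ∑ l, x l :=
  Finset.sum_nonneg fun l _ => (hx l).le

lemma abs_sub_le_of_Rplus {n : ℕ} {x : Fin n → ℝ} (hx : x ∈ Rplus n) (i j : Fin n) :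
    |x i - x j| ≤ ∑ l, x l := by
  have h1 := le_sum_of_Rplus hx i
  have h2 := le_sum_of_Rplus hx j
  have h3 := hx i
  have h4 := hx j
  rw [abs_le]; constructor <;> linarith

/-- On the orthant the weights grow at most like a power of `1 + ∑ x_l`, uniformly in the
exponent `s`, the decay rate `c` and the regularization parameter `ε`. -/
lemma Wt_le (n : ℕ) (k s₀ : ℝ) (hk : 0 < k) : ∃ N : ℕ, ∀ s c ε : ℝ, 0 ≤ s → s ≤ s₀ → 0 ≤ ε →
    ε ≤ 1 → ∀ x ∈ Rplus n,
      Wt n k s c ε x ≤ (1 + ∑ l, x l) ^ N * Real.exp (-c * ∑ l, x l) := by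
  obtain ⟨N, hN⟩ := exists_nat_ge (max s₀ k)
  refine ⟨N * n + N * n * n, fun s c ε hs hs0 hε hε1 x hx => ?_⟩
  have hM := sum_nonneg_of_Rplus hx
  have hM1 : 1 ≤ 1 + ∑ l, x l := by linarith
  have h1 : ∏ l, x l ^ s ≤ (1 + ∑ l, x l) ^ (N * n) := by
    calc ∏ l, x l ^ s ≤ ∏ l : Fin n, (1 + ∑ l, x l) ^ N := by
          refine Finset.prod_le_prod (fun l _ => Real.rpow_nonneg (hx l).le _) fun l _ => ?_
          rw [← Real.rpow_natCast]
          refine (Real.rpow_le_rpow (hx l).le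
            (by linarith [le_sum_of_Rplus hx l] : x l ≤ 1 + ∑ l, x l) hs).trans ?_
          exact Real.rpow_le_rpow_of_exponent_le hM1
            (hs0.trans ((le_max_left _ _).trans hN))
      _ = _ := by simp [pow_mul]
  have h2 : om n k ε x ≤ (1 + ∑ l, x l) ^ (N * n * n) := by
    calc om n k ε x ≤ ∏ a : Fin n, ∏ b : Fin n, (1 + ∑ l, x l) ^ N := by
          unfold om
          refine Finset.prod_le_prod (fun a _ => Finset.prod_nonneg fun b _ => ?_) fun a _ =>
            Finset.prod_le_prod (fun b _ => ?_) fun b _ => ?_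
          · split_ifs <;> positivity
          · split_ifs <;> positivity
          · split_ifs with hab
            · exact one_le_pow₀ hM1
            · have h3 : (x a - x b) ^ 2 + ε ≤ (1 + ∑ l, x l) ^ 2 := by
                have := abs_sub_le_of_Rplus hx a b
                have h4 : (x a - x b) ^ 2 ≤ (∑ l, x l) ^ 2 := by
                  rw [← sq_abs]
                  exact pow_le_pow_left₀ (abs_nonneg _) this 2
                nlinarith
              refine (Real.rpow_le_rpow (by positivity) h3 (by positivity)).trans ?_
              rw [← Real.rpow_natCast, ← Real.rpow_mul (by positivity), ← Real.rpow_natCast]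
              refine Real.rpow_le_rpow_of_exponent_le hM1 ?_
              have := (le_max_right s₀ k).trans hN
              push_cast
              linarith
      _ = _ := by simp [pow_mul]
  unfold Wt
  calc _ = ((∏ l, x l ^ s) * om n k ε x) * Real.exp (-c * ∑ l, x l) := by ring
    _ ≤ ((1 + ∑ l, x l) ^ (N * n) * (1 + ∑ l, x l) ^ (N * n * n)) * Real.exp (-c * ∑ l, x l) := by
        gcongr
        exact om_nonneg n k hε x
    _ = _ := by rw [pow_add]

lemma integrableOn_exp (n : ℕ) {c : ℝ} (hc : 0 < c) :
    IntegrableOn (fun x : Fin n → ℝ => Real.exp (-c * ∑ l, x l)) (Rplus n) := by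
  have h : (fun x : Fin n → ℝ => Real.exp (-c * ∑ l, x l)) =
      fun x => ∏ l, Real.exp (-c * x l) := by
    ext x; rw [← Real.exp_sum, Finset.mul_sum]
  rw [IntegrableOn, Rplus_eq_pi, h, volume_pi, Measure.restrict_pi_pi]
  exact Integrable.fintype_prod fun _ => integrableOn_exp_mul_Ioi (by linarith) 0

lemma integrableOn_pow_exp (n N : ℕ) {c : ℝ} (hc : 0 < c) :
    IntegrableOn (fun x : Fin n → ℝ => (1 + ∑ l, x l) ^ N * Real.exp (-c * ∑ l, x l))
      (Rplus n) := by
  refine Integrable.mono' ((integrableOn_exp n (half_pos hc)).const_mul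
    (N.factorial * (2 / c) ^ N * Real.exp (c / 2))) (by fun_prop) ?_
  refine (ae_restrict_iff' (measurableSet_Rplus n)).2 (ae_of_all _ fun x hx => ?_)
  have hM := sum_nonneg_of_Rplus hx
  set S := ∑ l, x l
  rw [Real.norm_of_nonneg (by positivity)]
  have h1 := Real.pow_div_factorial_le_exp (c / 2 * (1 + S)) (by positivity) N
  rw [div_le_iff₀ (by positivity)] at h1
  have h2 : (1 + S) ^ N = (2 / c) ^ N * (c / 2 * (1 + S)) ^ N := by
    rw [← mul_pow]; congr 1; field_simp
  have h3 : Real.exp (-c * S) * Real.exp (c / 2 * (1 + S)) =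
      Real.exp (c / 2) * Real.exp (-(c / 2) * S) := by
    rw [← Real.exp_add, ← Real.exp_add]; congr 1; ring
  rw [h2]
  calc (2 / c) ^ N * (c / 2 * (1 + S)) ^ N * Real.exp (-c * S)
      ≤ (2 / c) ^ N * (Real.exp (c / 2 * (1 + S)) * N.factorial) * Real.exp (-c * S) := by
        gcongr
    _ = (N.factorial * (2 / c) ^ N) * (Real.exp (-c * S) * Real.exp (c / 2 * (1 + S))) := by ring
    _ = _ := by rw [h3]; ring

/-- Integrability criterion used throughout: polynomial growth times exponential decay. -/
lemma integrableOn_of_le {n : ℕ} {E : Type*} [NormedAddCommGroup E] (F : (Fin n → ℝ) → E)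
    (N : ℕ) (C c : ℝ) (hc : 0 < c)
    (hF : AEStronglyMeasurable F (volume.restrict (Rplus n)))
    (hb : ∀ x ∈ Rplus n, ‖F x‖ ≤ C * ((1 + ∑ l, x l) ^ N * Real.exp (-c * ∑ l, x l))) :
    IntegrableOn F (Rplus n) :=
  Integrable.mono' ((integrableOn_pow_exp n N hc).const_mul C) hF
    ((ae_restrict_iff' (measurableSet_Rplus n)).2 (ae_of_all _ hb))

/-- Permuting coordinates preserves integrals over the orthant. -/
lemma integral_perm {n : ℕ} (σ : Equiv.Perm (Fin n)) (F : (Fin n → ℝ) → ℂ) :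
    ∫ x in Rplus n, F (x ∘ σ) = ∫ x in Rplus n, F x := by
  have h := volume_measurePreserving_piCongrLeft (fun _ : Fin n => ℝ) σ⁻¹
  have h2 : ∀ x : Fin n → ℝ, (MeasurableEquiv.piCongrLeft (fun _ : Fin n => ℝ) σ⁻¹) x = x ∘ σ := by
    intro x; ext i
    have := Equiv.piCongrLeft_apply_apply (fun _ : Fin n => ℝ) σ⁻¹ x (σ i)
    rw [MeasurableEquiv.coe_piCongrLeft]
    simpa using this
  have h3 := h.setIntegral_preimage_emb (MeasurableEquiv.measurableEmbedding _) F (Rplus n)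
  rw [← h3]
  have h4 : (MeasurableEquiv.piCongrLeft (fun _ : Fin n => ℝ) σ⁻¹) ⁻¹' Rplus n = Rplus n := by
    ext x
    rw [Set.mem_preimage, h2]
    exact ⟨fun h i => by simpa using h (σ⁻¹ i), fun h i => h _⟩
  rw [h4]
  simp_rw [h2]

/-- Almost every point has pairwise distinct coordinates. -/
lemma ae_injective (n : ℕ) : ∀ᵐ x : Fin n → ℝ, Function.Injective x := by
  have h : ∀ i j : Fin n, ∀ᵐ x : Fin n → ℝ, i ≠ j → x i ≠ x j := by
    intro i j
    by_cases hij : i = j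
    · simp [hij]
    · let p : Submodule ℝ (Fin n → ℝ) :=
        LinearMap.ker ((LinearMap.proj i : (Fin n → ℝ) →ₗ[ℝ] ℝ) - LinearMap.proj j)
      have hp : p ≠ ⊤ := by
        intro h
        have : (Pi.single i 1 : Fin n → ℝ) ∈ p := h ▸ Submodule.mem_top
        simp [p, Ne.symm hij] at this
      have h0 := Measure.addHaar_submodule volume p hp
      refine (measure_eq_zero_iff_ae_notMem.1 h0).mono fun x hx _ hxe => hx ?_
      simp [p, hxe]
  filter_upwards [ae_all_iff.2 fun i => ae_all_iff.2 (h i)] with x hx i j hij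
  by_contra hne
  exact hx i j hne hij

/-! ### Integration by parts for the regularized weight -/

/-- For `s > 0` the truncated power `t_+^{s+1}` is differentiable everywhere, also at `0`. This is why
the weight, extended by zero outside the orthant and multiplied by `x_i`, may be differentiated on
all of `ℝⁿ`. -/
lemma hasDerivAt_max_rpow {s : ℝ} (hs : 0 < s) (t : ℝ) :
    HasDerivAt (fun t : ℝ => max t 0 ^ (s + 1)) ((s + 1) * max t 0 ^ s) t := by
  rcases lt_trichotomy t 0 with ht | ht | ht
  · rw [max_eq_right ht.le, Real.zero_rpow hs.ne', mul_zero]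
    refine (hasDerivAt_const t (0 : ℝ)).congr_of_eventuallyEq ?_
    filter_upwards [gt_mem_nhds ht] with u hu
    rw [max_eq_right hu.le, Real.zero_rpow (by positivity)]
  · subst ht
    rw [max_self, Real.zero_rpow hs.ne', mul_zero]
    have h := hasDerivAt_abs_rpow (0 : ℝ) (p := s + 1) (by linarith)
    rw [mul_zero, hasDerivAt_iff_isLittleO] at h
    rw [hasDerivAt_iff_isLittleO]
    refine Asymptotics.IsBigO.trans_isLittleO (Asymptotics.IsBigO.of_bound 1 ?_) h
    refine Filter.Eventually.of_forall fun u => ?_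
    have h0 : (0 : ℝ) ^ (s + 1) = 0 := Real.zero_rpow (by positivity)
    simp only [max_self, abs_zero, h0, smul_zero, sub_zero, one_mul]
    rw [Real.norm_of_nonneg (by positivity), Real.norm_of_nonneg (by positivity)]
    exact Real.rpow_le_rpow (le_max_right _ _) (max_le (le_abs_self _) (abs_nonneg _))
      (by positivity)
  · rw [max_eq_left ht.le]
    have h := Real.hasDerivAt_rpow_const (x := t) (p := s + 1) (Or.inl ht.ne')
    rw [add_sub_cancel_right] at h
    refine h.congr_of_eventuallyEq ?_
    filter_upwards [lt_mem_nhds ht] with u hu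
    rw [max_eq_left hu.le]

/-- The regularization of `1 / (x_i - x_j)`. -/
noncomputable def th {n : ℕ} (ε : ℝ) (i j : Fin n) (x : Fin n → ℝ) : ℝ :=
  (x i - x j) / ((x i - x j) ^ 2 + ε)

@[fun_prop]
lemma measurable_th {n : ℕ} (ε : ℝ) (i j : Fin n) : Measurable (th ε i j) := by
  unfold th; fun_prop

/-- Logarithmic derivative of the regularized weight in the direction `e_i`; each unordered pair
`{i, j}` occurs twice in the product, whence the factor `2k`. -/
lemma om_hasDerivAt (n : ℕ) (k : ℝ) {ε : ℝ} (hε : 0 < ε) (x : Fin n → ℝ) (i : Fin n) :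
    HasDerivAt (fun t => om n k ε (Function.update x i t))
      (om n k ε x * (2 * k * ∑ j, th ε i j x)) (x i) := by
  have hexp : ∀ y : Fin n → ℝ, om n k ε y =
      Real.exp (∑ a, ∑ b, if a = b then 0 else Real.log ((y a - y b) ^ 2 + ε) * (k / 2)) := by
    intro y
    unfold om
    rw [Real.exp_sum]
    refine Finset.prod_congr rfl fun a _ => ?_
    rw [Real.exp_sum]
    refine Finset.prod_congr rfl fun b _ => ?_
    split_ifs
    · simp
    · rw [Real.rpow_def_of_pos (by positivity)]
  have hu : ∀ a, HasDerivAt (fun t => Function.update x i t a) ((Pi.single i 1 : Fin n → ℝ) a)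
      (x i) := hasDerivAt_pi.1 (hasDerivAt_update x i (x i))
  have hterm : ∀ a b, HasDerivAt (fun t => if a = b then 0 else
      Real.log ((Function.update x i t a - Function.update x i t b) ^ 2 + ε) * (k / 2))
      (k * th ε a b x * ((Pi.single i 1 : Fin n → ℝ) a - (Pi.single i 1 : Fin n → ℝ) b)) (x i) := by
    intro a b
    split_ifs with hab
    · subst hab
      simpa using hasDerivAt_const (x i) (0 : ℝ)
    · have h := (((((hu a).sub (hu b)).pow 2).add_const ε).log
        (by simp only [Pi.sub_apply, Pi.pow_apply]; positivity)).mul_const (k / 2)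
      refine h.congr_deriv ?_
      simp only [Pi.sub_apply, Pi.pow_apply, Function.update_eq_self, th]
      field_simp
      push_cast
      ring
  have hsum := HasDerivAt.fun_sum (u := univ) fun a _ =>
    HasDerivAt.fun_sum (u := univ) fun b _ => hterm a b
  have h := hsum.exp
  simp_rw [← hexp] at h
  rw [Function.update_eq_self] at h
  refine h.congr_deriv ?_
  congr 1
  have hanti : ∀ a, th ε a i x = - th ε i a x := by
    intro a
    unfold th
    rw [← neg_div, neg_sub, ← neg_sub (x i) (x a), neg_sq]
  simp_rw [mul_sub, Finset.sum_sub_distrib]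
  have e1 : ∑ a, ∑ b, k * th ε a b x * (Pi.single i 1 : Fin n → ℝ) a = k * ∑ b, th ε i b x := by
    rw [Finset.sum_comm]
    simp [Pi.single_apply, Finset.mul_sum]
  have e2 : ∑ a, ∑ b, k * th ε a b x * (Pi.single i 1 : Fin n → ℝ) b = - (k * ∑ b, th ε i b x) := by
    simp [Pi.single_apply, Finset.mul_sum, hanti]
  rw [e1, e2]
  ring

lemma indicator_Wt (n : ℕ) {s : ℝ} (hs : 0 < s) (k c ε : ℝ) (x : Fin n → ℝ) :
    (Rplus n).indicator (Wt n k s c ε) x =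
      (∏ l, max (x l) 0 ^ s) * Real.exp (-c * ∑ l, x l) * om n k ε x := by
  by_cases hx : x ∈ Rplus n
  · rw [Set.indicator_of_mem hx, Wt]
    congr 2
    exact Finset.prod_congr rfl fun l _ => by rw [max_eq_left (hx l).le]
  · rw [Set.indicator_of_notMem hx]
    simp only [Rplus, Set.mem_ofPred_eq, not_forall, not_lt] at hx
    obtain ⟨l, hl⟩ := hx
    rw [Finset.prod_eq_zero (Finset.mem_univ l), zero_mul, zero_mul]
    rw [max_eq_right hl, Real.zero_rpow hs.ne']

/-- The directional derivative along `e_i` of `x_i` times the regularized weight. -/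
lemma weight_hasDerivAt (n : ℕ) {s ε : ℝ} (hs : 0 < s) (hε : 0 < ε) (k c : ℝ)
    (x : Fin n → ℝ) (i : Fin n) :
    HasDerivAt (fun t => (Rplus n).indicator (Wt n k s c ε) (Function.update x i t) * t)
      ((Rplus n).indicator (Wt n k s c ε) x *
        (s + 1 - c * x i + 2 * k * x i * ∑ j, th ε i j x)) (x i) := by
  set K := ∏ l ∈ univ.erase i, max (x l) 0 ^ s with hK
  have hp : ∀ t, ∏ l, max (Function.update x i t l) 0 ^ s = max t 0 ^ s * K := by
    intro t
    rw [← Finset.mul_prod_erase univ _ (Finset.mem_univ i), Function.update_self]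
    congr 1
    refine Finset.prod_congr rfl fun l hl => ?_
    rw [Function.update_of_ne (Finset.ne_of_mem_erase hl)]
  have hq : ∀ t : ℝ, max t 0 ^ s * t = max t 0 ^ (s + 1) := by
    intro t
    rcases le_or_gt t 0 with ht | ht
    · rw [max_eq_right ht, Real.zero_rpow hs.ne', Real.zero_rpow (by positivity), zero_mul]
    · rw [max_eq_left ht.le, Real.rpow_add_one ht.ne']
  have hS : HasDerivAt (fun t => ∑ l, Function.update x i t l) 1 (x i) := by
    have h := HasDerivAt.fun_sum (u := univ) fun a _ =>
      hasDerivAt_pi.1 (hasDerivAt_update x i (x i)) a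
    refine h.congr_deriv ?_
    simp
  have h := (((hasDerivAt_max_rpow hs (x i)).mul_const K).mul
    ((hS.const_mul (-c)).exp)).mul (om_hasDerivAt n k hε x i)
  have hpx := hp (x i)
  rw [Function.update_eq_self] at hpx
  refine (h.congr_of_eventuallyEq (Filter.Eventually.of_forall fun t => ?_)).congr_deriv ?_
  · simp only [Pi.mul_apply]
    rw [indicator_Wt n hs, hp, ← hq]
    ring
  · simp only [Pi.mul_apply, Function.update_eq_self]
    rw [indicator_Wt n hs, hpx, ← hq]
    ring

lemma abs_th_le {n : ℕ} {ε : ℝ} (hε : 0 < ε) (i j : Fin n) (x : Fin n → ℝ) :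
    |th ε i j x| ≤ |x i - x j| / ε := by
  unfold th
  rw [abs_div, abs_of_pos (by positivity : 0 < (x i - x j) ^ 2 + ε)]
  gcongr
  nlinarith [sq_nonneg (x i - x j)]

lemma abs_th_mul_le {n : ℕ} {ε : ℝ} (hε : 0 < ε) (i j : Fin n) (x : Fin n → ℝ) :
    |th ε i j x| * |x i - x j| ≤ 1 := by
  unfold th
  rw [abs_div, abs_of_pos (by positivity : 0 < (x i - x j) ^ 2 + ε), div_mul_eq_mul_div,
    div_le_one (by positivity), ← sq, sq_abs]
  linarith

/-- Integration by parts in the direction `e_i` against the regularized weight.  The weight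
vanishes to positive order on the boundary of the orthant, hence no boundary term. -/
lemma ibp_eps (n : ℕ) {k s c ε : ℝ} (hk : 0 < k) (hs : 0 < s) (hc : 0 < c) (hε : 0 < ε)
    (hε1 : ε ≤ 1) (i : Fin n) (f f' : (Fin n → ℝ) → ℂ) (hf : Measurable f) (hf' : Measurable f')
    (hd : ∀ x, HasLineDerivAt ℝ f (f' x) x (Pi.single i 1))
    (N : ℕ) (C : ℝ) (hb : ∀ x ∈ Rplus n, ‖f x‖ ≤ C * (1 + ∑ l, x l) ^ N)
    (hb' : ∀ x ∈ Rplus n, ‖f' x‖ ≤ C * (1 + ∑ l, x l) ^ N) :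
    IntegrableOn (fun x => (Wt n k s c ε x : ℂ) *
      (((s + 1 - c * x i + 2 * k * x i * ∑ j, th ε i j x : ℝ) : ℂ) * f x + (x i : ℂ) * f' x))
      (Rplus n) ∧
    ∫ x in Rplus n, (Wt n k s c ε x : ℂ) *
      (((s + 1 - c * x i + 2 * k * x i * ∑ j, th ε i j x : ℝ) : ℂ) * f x + (x i : ℂ) * f' x)
      = 0 := by
  obtain ⟨N₁, hW⟩ := Wt_le n k s hk
  set F : (Fin n → ℝ) → ℂ := fun x => (((Rplus n).indicator (Wt n k s c ε) x * x i : ℝ) : ℂ) * f x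
    with hF
  set F' : (Fin n → ℝ) → ℂ := fun x => (((Rplus n).indicator (Wt n k s c ε) x : ℝ) : ℂ) *
      (((s + 1 - c * x i + 2 * k * x i * ∑ j, th ε i j x : ℝ) : ℂ) * f x + (x i : ℂ) * f' x)
    with hF'
  have hFd : ∀ x, HasLineDerivAt ℝ F (F' x) x (Pi.single i 1) := by
    intro x
    have hx : ∀ t : ℝ, x + t • (Pi.single i 1 : Fin n → ℝ) = Function.update x i (x i + t) := by
      intro t; ext l
      by_cases hl : l = i
      · subst hl; simp
      · simp [hl]
    have h1 := weight_hasDerivAt n hs hε k c x i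
    have h2 : HasDerivAt (fun t : ℝ => (Rplus n).indicator (Wt n k s c ε) (x + t • (Pi.single i 1 : Fin n → ℝ)) *
        (x + t • (Pi.single i 1 : Fin n → ℝ)) i) ((Rplus n).indicator (Wt n k s c ε) x *
        (s + 1 - c * x i + 2 * k * x i * ∑ j, th ε i j x)) 0 := by
      rw [← add_zero (x i)] at h1
      have h3 := HasDerivAt.comp_const_add (x i) 0 h1
      simp only [add_zero] at h3
      simp_rw [hx, Function.update_self]
      simpa only [Function.update_eq_self] using h3
    refine ((h2.ofReal_comp.mul (hd x)).congr_deriv ?_ : HasDerivAt _ _ _)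
    simp only [zero_smul, add_zero, hF']
    push_cast
    ring
  have hFi : ∀ x, F x = (Rplus n).indicator (fun x => ((Wt n k s c ε x * x i : ℝ) : ℂ) * f x) x := by
    intro x
    by_cases hx : x ∈ Rplus n <;> simp [hF, hx]
  have hFi' : ∀ x, F' x = (Rplus n).indicator (fun x => (Wt n k s c ε x : ℂ) *
      (((s + 1 - c * x i + 2 * k * x i * ∑ j, th ε i j x : ℝ) : ℂ) * f x + (x i : ℂ) * f' x)) x := by
    intro x
    by_cases hx : x ∈ Rplus n <;> simp [hF', hx]
  have hint : Integrable F := by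
    rw [funext hFi, integrable_indicator_iff (measurableSet_Rplus n)]
    refine integrableOn_of_le _ (N₁ + 1 + N) C c hc
      (Measurable.aestronglyMeasurable (by fun_prop)) fun x hx => ?_
    have hS := sum_nonneg_of_Rplus hx
    have h0 := Wt_nonneg n k s c hε.le hx
    have hxi := hx i
    rw [norm_mul, Complex.norm_of_nonneg (by positivity)]
    calc _ ≤ (((1 + ∑ l, x l) ^ N₁ * Real.exp (-c * ∑ l, x l)) * (1 + ∑ l, x l)) *
          (C * (1 + ∑ l, x l) ^ N) := by
          gcongr
          · exact hW s c ε hs.le le_rfl hε.le hε1 x hx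
          · linarith [le_sum_of_Rplus hx i]
          · exact hb x hx
      _ = _ := by ring
  have hint' : Integrable F' := by
    rw [funext hFi', integrable_indicator_iff (measurableSet_Rplus n)]
    refine integrableOn_of_le _ (N₁ + 2 + N) ((s + 1 + c + 2 * k * (n / ε) + 1) * C) c hc
      (Measurable.aestronglyMeasurable (by fun_prop)) fun x hx => ?_
    have hS := sum_nonneg_of_Rplus hx
    have h0 := Wt_nonneg n k s c hε.le hx
    have hxi : 0 < x i := hx i
    have hxM : x i ≤ 1 + ∑ l, x l := by linarith [le_sum_of_Rplus hx i]
    set M := 1 + ∑ l, x l with hM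
    have hM1 : 1 ≤ M := by linarith
    have hC : 0 ≤ C := by
      have := (norm_nonneg _).trans (hb x hx)
      exact nonneg_of_mul_nonneg_left this (by positivity)
    have hM2 : M ≤ M ^ 2 := by nlinarith
    have hth : |∑ j, th ε i j x| ≤ n / ε * M := by
      refine (Finset.abs_sum_le_sum_abs _ _).trans ?_
      calc ∑ j, |th ε i j x| ≤ ∑ j : Fin n, M / ε := by
            refine Finset.sum_le_sum fun j _ => (abs_th_le hε i j x).trans ?_
            gcongr
            linarith [abs_sub_le_of_Rplus hx i j]
        _ = _ := by simp; ring
    have hA : |s + 1 - c * x i + 2 * k * x i * ∑ j, th ε i j x| ≤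
        (s + 1 + c + 2 * k * (n / ε)) * M ^ 2 := by
      have t1 : |2 * k * x i * ∑ j, th ε i j x| ≤ 2 * k * (n / ε) * M ^ 2 := by
        rw [abs_mul, abs_of_pos (by positivity : 0 < 2 * k * x i)]
        calc _ ≤ 2 * k * M * (n / ε * M) := by gcongr
          _ = _ := by ring
      have t2 : |c * x i| ≤ c * M ^ 2 := by
        rw [abs_of_pos (by positivity)]
        gcongr
        linarith
      have t3 : |s + 1| ≤ (s + 1) * M ^ 2 := by
        rw [abs_of_pos (by positivity)]
        nlinarith
      calc _ ≤ |s + 1| + |c * x i| + |2 * k * x i * ∑ j, th ε i j x| :=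
            (abs_add_le _ _).trans (by gcongr; exact abs_sub _ _)
        _ ≤ _ := by linarith
    rw [norm_mul, Complex.norm_of_nonneg h0]
    calc _ ≤ (M ^ N₁ * Real.exp (-c * ∑ l, x l)) *
          ((s + 1 + c + 2 * k * (n / ε)) * M ^ 2 * (C * M ^ N) + M ^ 2 * (C * M ^ N)) := by
          gcongr
          · exact hW s c ε hs.le le_rfl hε.le hε1 x hx
          · refine (norm_add_le _ _).trans ?_
            rw [norm_mul, norm_mul, Complex.norm_real, Complex.norm_of_nonneg hxi.le,
              Real.norm_eq_abs]
            have := hb x hx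
            have := hb' x hx
            gcongr
            linarith
      _ = _ := by ring
  -- the integral over `ℝⁿ` of the directional derivative `F'` is zero: pair it with the constant 1
  have key := integral_bilinear_hasLineDerivAt_right_eq_neg_left_of_integrable
    (μ := (volume : Measure (Fin n → ℝ))) (v := Pi.single i 1)
    (f := fun _ : Fin n → ℝ => (1 : ℂ)) (f' := fun _ => 0) (g := F) (g' := F')
    (B := ContinuousLinearMap.mul ℝ ℂ) (by simp) (by simpa using hint')
    (by simpa using hint) (fun x _ => by
      simpa [HasLineDerivAt] using hasDerivAt_const (0 : ℝ) (1 : ℂ)) fun x _ => hFd x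
  simp only [ContinuousLinearMap.mul_apply', one_mul, zero_mul, integral_zero, neg_zero] at key
  refine ⟨by rwa [funext hFi', integrable_indicator_iff (measurableSet_Rplus n)] at hint', ?_⟩
  rw [← key, funext hFi', integral_indicator (measurableSet_Rplus n)]

/-! ### Skew-adjointness of the Dunkl operators -/

lemma integral_eq_zero_of_antisymm {n : ℕ} (σ : Equiv.Perm (Fin n)) (G : (Fin n → ℝ) → ℂ)
    (h : ∀ x, G (x ∘ σ) = - G x) : ∫ x in Rplus n, G x = 0 := by
  have h1 := integral_perm σ G
  simp_rw [h, integral_neg] at h1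
  exact self_eq_neg.1 h1.symm

lemma th_swap {n : ℕ} (ε : ℝ) (i j : Fin n) (x : Fin n → ℝ) :
    th ε i j (x ∘ Equiv.swap i j) = - th ε i j x := by
  unfold th
  simp only [Function.comp, Equiv.swap_apply_left, Equiv.swap_apply_right]
  rw [← neg_div, neg_sub, ← neg_sub (x i) (x j), neg_sq]

lemma th_self {n : ℕ} (ε : ℝ) (i : Fin n) (x : Fin n → ℝ) : th ε i i x = 0 := by
  simp [th]

lemma comp_perm_mem_Rplus {n : ℕ} {x : Fin n → ℝ} (hx : x ∈ Rplus n) (σ : Equiv.Perm (Fin n)) :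
    x ∘ σ ∈ Rplus n := fun i => hx (σ i)

lemma sum_comp_perm {n : ℕ} (x : Fin n → ℝ) (σ : Equiv.Perm (Fin n)) :
    ∑ l, (x ∘ σ) l = ∑ l, x l := Equiv.sum_comp σ x

/-- Symmetrization of `ibp_eps`: the terms singular as `ε → 0` are combined, by antisymmetry under
the transposition `(i j)`, into difference quotients. -/
lemma ibp_sym (n : ℕ) {k s c ε : ℝ} (hk : 0 < k) (hs : 0 < s) (hc : 0 < c) (hε : 0 < ε)
    (hε1 : ε ≤ 1) (i : Fin n) (f f' : (Fin n → ℝ) → ℂ) (hf : Measurable f) (hf' : Measurable f')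
    (hd : ∀ x, HasLineDerivAt ℝ f (f' x) x (Pi.single i 1))
    (N : ℕ) (C : ℝ) (hb : ∀ x ∈ Rplus n, ‖f x‖ ≤ C * (1 + ∑ l, x l) ^ N)
    (hb' : ∀ x ∈ Rplus n, ‖f' x‖ ≤ C * (1 + ∑ l, x l) ^ N) :
    ∫ x in Rplus n, (Wt n k s c ε x : ℂ) *
      ((s + 1 - c * x i) * f x + x i * f' x + k * ∑ j ∈ univ.erase i,
        (th ε i j x * (x i - x j) * f x + x i * (th ε i j x * (f x - f (x ∘ Equiv.swap i j)))))
      = 0 := by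
  obtain ⟨hI, h0⟩ := ibp_eps n hk hs hc hε hε1 i f f' hf hf' hd N C hb hb'
  obtain ⟨N₁, hW⟩ := Wt_le n k s hk
  -- `G j` is antisymmetric under `(i j)`; subtracting it turns `2 x_i f` into a sum of terms that
  -- stay bounded as `ε → 0`
  set G : Fin n → (Fin n → ℝ) → ℂ := fun j x => (Wt n k s c ε x : ℂ) *
    (th ε i j x * (x j * f x + x i * f (x ∘ Equiv.swap i j))) with hG
  have hG0 : ∀ j, ∫ x in Rplus n, G j x = 0 := by
    intro j
    refine integral_eq_zero_of_antisymm (Equiv.swap i j) _ fun x => ?_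
    have e : (x ∘ Equiv.swap i j) ∘ Equiv.swap i j = x := by ext; simp
    simp only [hG, Wt_perm, th_swap, e]
    simp only [Function.comp, Equiv.swap_apply_left, Equiv.swap_apply_right]
    push_cast
    ring
  have hGi : ∀ j, IntegrableOn (G j) (Rplus n) := by
    intro j
    refine integrableOn_of_le _ (N₁ + 2 + N) (2 * C / ε) c hc
      (Measurable.aestronglyMeasurable (by fun_prop)) fun x hx => ?_
    have hS := sum_nonneg_of_Rplus hx
    have h0 := Wt_nonneg n k s c hε.le hx
    have hxi : 0 < x i := hx i
    have hxj : 0 < x j := hx j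
    have hxM : x i ≤ 1 + ∑ l, x l := by linarith [le_sum_of_Rplus hx i]
    have hxM' : x j ≤ 1 + ∑ l, x l := by linarith [le_sum_of_Rplus hx j]
    have hf1 := hb x hx
    have hf2 := hb _ (comp_perm_mem_Rplus hx (Equiv.swap i j))
    rw [sum_comp_perm] at hf2
    have hth := abs_th_le hε i j x
    have hd := abs_sub_le_of_Rplus hx i j
    have hWx := hW s c ε hs.le le_rfl hε.le hε1 x hx
    set M := 1 + ∑ l, x l with hM
    simp only [hG]
    rw [norm_mul, Complex.norm_of_nonneg h0, norm_mul, Complex.norm_real, Real.norm_eq_abs]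
    calc _ ≤ (M ^ N₁ * Real.exp (-c * ∑ l, x l)) *
          ((M / ε) * (M * (C * M ^ N) + M * (C * M ^ N))) := by
          gcongr
          · exact hth.trans (by gcongr; linarith)
          · refine (norm_add_le _ _).trans ?_
            rw [norm_mul, norm_mul, Complex.norm_of_nonneg hxi.le, Complex.norm_of_nonneg hxj.le]
            gcongr
      _ = _ := by ring
  have hsum : ∫ x in Rplus n, (k : ℂ) * ∑ j ∈ univ.erase i, G j x = 0 := by
    rw [integral_const_mul, integral_finsetSum _ fun j _ => hGi j]
    simp [hG0]
  have hsumi : IntegrableOn (fun x => (k : ℂ) * ∑ j ∈ univ.erase i, G j x) (Rplus n) :=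
    (integrable_finsetSum _ fun j _ => hGi j).const_mul _
  have h1 := integral_sub hI hsumi
  rw [h0, hsum, sub_zero] at h1
  rw [← h1]
  refine integral_congr_ae (ae_of_all _ fun x => ?_)
  simp only [hG]
  rw [← Finset.add_sum_erase univ (fun j => th ε i j x) (Finset.mem_univ i), th_self, zero_add,
    ← Finset.mul_sum, mul_left_comm (k : ℂ), ← mul_sub]
  congr 1
  push_cast
  have h2 : ∑ j ∈ univ.erase i, ((th ε i j x : ℂ) * (x i - x j) * f x +
      x i * (th ε i j x * (f x - f (x ∘ Equiv.swap i j)))) =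
      2 * x i * f x * (∑ j ∈ univ.erase i, (th ε i j x : ℂ)) -
      ∑ j ∈ univ.erase i, (th ε i j x : ℂ) * (x j * f x + x i * f (x ∘ Equiv.swap i j)) := by
    rw [Finset.mul_sum, ← Finset.sum_sub_distrib]
    exact Finset.sum_congr rfl fun j _ => by ring
  rw [h2]
  ring

lemma continuous_Wt_eps (n : ℕ) {k : ℝ} (hk : 0 < k) (s c : ℝ) (x : Fin n → ℝ) :
    Continuous fun ε => Wt n k s c ε x := by
  unfold Wt om
  refine continuous_const.mul (continuous_finsetProd _ fun a _ =>
    continuous_finsetProd _ fun b _ => ?_)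
  split_ifs
  · exact continuous_const
  · exact Continuous.rpow_const (by fun_prop) fun _ => Or.inr (by positivity)

/-- Skew-adjointness of the `i`-th Dunkl operator on the orthant, tested on `x_i f` against the
symmetric weight `D^s e^{-c ∑ x_l} ω_k`.  The bound `hb2` keeps the difference quotients of `f`
bounded, so that `ε → 0` is permitted in `ibp_sym` by dominated convergence. -/
lemma ibp (n : ℕ) {k s c : ℝ} (hk : 0 < k) (hs : 0 < s) (hc : 0 < c)
    (i : Fin n) (f f' : (Fin n → ℝ) → ℂ) (hf : Measurable f) (hf' : Measurable f')
    (hd : ∀ x, HasLineDerivAt ℝ f (f' x) x (Pi.single i 1))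
    (N : ℕ) (C : ℝ) (hb : ∀ x ∈ Rplus n, ‖f x‖ ≤ C * (1 + ∑ l, x l) ^ N)
    (hb' : ∀ x ∈ Rplus n, ‖f' x‖ ≤ C * (1 + ∑ l, x l) ^ N)
    (hb2 : ∀ x ∈ Rplus n, ∀ j, ‖f x - f (x ∘ Equiv.swap i j)‖ ≤
      C * (1 + ∑ l, x l) ^ N * |x i - x j|) :
    ∫ x in Rplus n, (Wt n k s c 0 x : ℂ) *
      ((s + 1 + k * (n - 1) - c * x i) * f x + x i * (f' x + k * ∑ j ∈ univ.erase i,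
        (f x - f (x ∘ Equiv.swap i j)) / ((x i : ℂ) - (x j : ℂ)))) = 0 := by
  obtain ⟨N₁, hW⟩ := Wt_le n k s hk
  have hev : ∀ᶠ ε : ℝ in nhdsWithin 0 (Set.Ioi 0), 0 < ε ∧ ε ≤ 1 := by
    filter_upwards [Ioc_mem_nhdsGT (zero_lt_one (α := ℝ))] with ε h using h
  have key := tendsto_integral_filter_of_dominated_convergence
    (μ := volume.restrict (Rplus n)) (l := nhdsWithin (0 : ℝ) (Set.Ioi 0))
    (F := fun ε x => (Wt n k s c ε x : ℂ) *
      ((s + 1 - c * x i) * f x + x i * f' x + k * ∑ j ∈ univ.erase i,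
        (th ε i j x * (x i - x j) * f x + x i * (th ε i j x * (f x - f (x ∘ Equiv.swap i j))))))
    (f := fun x => (Wt n k s c 0 x : ℂ) *
      ((s + 1 + k * (n - 1) - c * x i) * f x + x i * (f' x + k * ∑ j ∈ univ.erase i,
        (f x - f (x ∘ Equiv.swap i j)) / ((x i : ℂ) - (x j : ℂ)))))
    (fun x => ((s + 1 + c + 1 + k * (n * 2)) * C) *
      ((1 + ∑ l, x l) ^ (N₁ + N + 1) * Real.exp (-c * ∑ l, x l)))
    (Filter.Eventually.of_forall fun ε => Measurable.aestronglyMeasurable (by fun_prop))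
    ?_ ((integrableOn_pow_exp n _ hc).const_mul _) ?_
  · refine tendsto_nhds_unique key (tendsto_const_nhds.congr' ?_)
    filter_upwards [hev] with ε hε
    exact (ibp_sym n hk hs hc hε.1 hε.2 i f f' hf hf' hd N C hb hb').symm
  · filter_upwards [hev] with ε hε
    refine (ae_restrict_iff' (measurableSet_Rplus n)).2 (ae_of_all _ fun x hx => ?_)
    have hS := sum_nonneg_of_Rplus hx
    have h0 := Wt_nonneg n k s c hε.1.le hx
    have hxi : 0 < x i := hx i
    have hxM : x i ≤ 1 + ∑ l, x l := by linarith [le_sum_of_Rplus hx i]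
    have hf1 := hb x hx
    have hf2 := hb' x hx
    have hf3 := hb2 x hx
    have hWx := hW s c ε hs.le le_rfl hε.1.le hε.2 x hx
    set M := 1 + ∑ l, x l with hM
    have hM1 : 1 ≤ M := by linarith
    have hC : 0 ≤ C := by
      have := (norm_nonneg _).trans (hb x hx)
      exact nonneg_of_mul_nonneg_left this (by positivity)
    have e1 : ‖((s : ℂ) + 1 - c * x i)‖ ≤ (s + 1 + c) * M := by
      have : ((s : ℂ) + 1 - c * x i) = ((s + 1 - c * x i : ℝ) : ℂ) := by push_cast; ring
      rw [this, Complex.norm_real, Real.norm_eq_abs]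
      refine (abs_sub _ _).trans ?_
      rw [abs_of_pos (by positivity), abs_of_pos (by positivity)]
      nlinarith
    have e2 : ∀ j, ‖(th ε i j x : ℂ) * (x i - x j) * f x +
        x i * (th ε i j x * (f x - f (x ∘ Equiv.swap i j)))‖ ≤ 2 * (M * (C * M ^ N)) := by
      intro j
      have hth := abs_th_mul_le hε.1 i j x
      have h3 : ‖(th ε i j x : ℂ) * (x i - x j)‖ ≤ 1 := by
        rw [← Complex.ofReal_sub, ← Complex.ofReal_mul, Complex.norm_real, Real.norm_eq_abs,
          abs_mul]
        exact hth
      have h4 : ‖(th ε i j x : ℂ) * (f x - f (x ∘ Equiv.swap i j))‖ ≤ C * M ^ N := by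
        rw [norm_mul, Complex.norm_real, Real.norm_eq_abs]
        calc _ ≤ |th ε i j x| * (C * M ^ N * |x i - x j|) := by gcongr; exact hf3 j
          _ = C * M ^ N * (|th ε i j x| * |x i - x j|) := by ring
          _ ≤ C * M ^ N * 1 := by gcongr
          _ = _ := mul_one _
      calc _ ≤ 1 * (C * M ^ N) + M * (C * M ^ N) := by
            refine (norm_add_le _ _).trans ?_
            rw [norm_mul _ (f x), norm_mul (x i : ℂ), Complex.norm_of_nonneg hxi.le]
            gcongr
        _ ≤ M * (C * M ^ N) + M * (C * M ^ N) := by gcongr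
        _ = _ := by ring
    have e3 : ‖∑ j ∈ univ.erase i, ((th ε i j x : ℂ) * (x i - x j) * f x +
        x i * (th ε i j x * (f x - f (x ∘ Equiv.swap i j))))‖ ≤ n * (2 * (M * (C * M ^ N))) := by
      refine (norm_sum_le _ _).trans ?_
      calc _ ≤ ∑ j ∈ univ.erase i, 2 * (M * (C * M ^ N)) := Finset.sum_le_sum fun j _ => e2 j
        _ ≤ ∑ j : Fin n, 2 * (M * (C * M ^ N)) :=
            Finset.sum_le_sum_of_subset_of_nonneg (Finset.erase_subset _ _)
              fun _ _ _ => by positivity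
        _ = _ := by simp
    rw [norm_mul, Complex.norm_of_nonneg h0]
    calc _ ≤ (M ^ N₁ * Real.exp (-c * ∑ l, x l)) *
          ((s + 1 + c) * M * (C * M ^ N) + M * (C * M ^ N) + k * (n * (2 * (M * (C * M ^ N))))) := by
          gcongr
          refine (norm_add_le _ _).trans (add_le_add ((norm_add_le _ _).trans (add_le_add ?_ ?_)) ?_)
          · rw [norm_mul]; gcongr
          · rw [norm_mul, Complex.norm_of_nonneg hxi.le]; gcongr
          · rw [norm_mul, Complex.norm_of_nonneg hk.le]; gcongr
      _ = _ := by ring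
  · refine ae_restrict_of_ae ((ae_injective n).mono fun x hinj => ?_)
    have hcW : Filter.Tendsto (fun ε => (Wt n k s c ε x : ℂ)) (nhdsWithin 0 (Set.Ioi 0))
        (nhds (Wt n k s c 0 x : ℂ)) :=
      ((Complex.continuous_ofReal.comp (continuous_Wt_eps n hk s c x)).tendsto 0).mono_left
        nhdsWithin_le_nhds
    have hcth : ∀ j ∈ univ.erase i, Filter.Tendsto (fun ε => (th ε i j x : ℂ))
        (nhdsWithin 0 (Set.Ioi 0)) (nhds (1 / ((x i : ℂ) - x j))) := by
      intro j hj
      have hne : x i - x j ≠ 0 := sub_ne_zero.2 fun h => Finset.ne_of_mem_erase hj (hinj h).symm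
      have h1 : Filter.Tendsto (fun ε => th ε i j x) (nhdsWithin 0 (Set.Ioi 0))
          (nhds (1 / (x i - x j))) := by
        have h2 : ContinuousAt (fun ε => th ε i j x) 0 := by
          unfold th
          exact continuousAt_const.div (by fun_prop) (by simpa using hne)
        have h3 : th 0 i j x = 1 / (x i - x j) := by
          unfold th; field_simp; simp
        rw [← h3]
        exact h2.tendsto.mono_left nhdsWithin_le_nhds
      simpa [Function.comp_def] using (Complex.continuous_ofReal.tendsto _).comp h1
    have hlim := hcW.mul ((tendsto_const_nhds (x := ((s : ℂ) + 1 - c * x i) * f x + x i * f' x)).add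
      ((tendsto_finsetSum (univ.erase i) fun j hj =>
        (((hcth j hj).mul_const ((x i : ℂ) - x j)).mul_const (f x)).add
          (((hcth j hj).mul_const (f x - f (x ∘ Equiv.swap i j))).const_mul (x i : ℂ))).const_mul
            (k : ℂ)))
    convert! hlim using 2
    congr 1
    have hs1 : ∀ j ∈ univ.erase i, (1 / ((x i : ℂ) - x j) * ((x i : ℂ) - x j) * f x +
        x i * (1 / ((x i : ℂ) - x j) * (f x - f (x ∘ Equiv.swap i j)))) =
        f x + x i * ((f x - f (x ∘ Equiv.swap i j)) / ((x i : ℂ) - x j)) := by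
      intro j hj
      have hne : (x i : ℂ) - x j ≠ 0 := sub_ne_zero.2 fun h =>
        Finset.ne_of_mem_erase hj (hinj (by exact_mod_cast h)).symm
      field_simp
    rw [Finset.sum_congr rfl hs1, Finset.sum_add_distrib, ← Finset.mul_sum]
    have hcard : ((univ.erase i).card : ℂ) = n - 1 := by
      rw [Finset.card_erase_of_mem (Finset.mem_univ i), Finset.card_univ, Fintype.card_fin,
        Nat.cast_sub (Nat.one_le_iff_ne_zero.2 (by rintro rfl; exact i.elim0)), Nat.cast_one]
    rw [Finset.sum_const, nsmul_eq_mul, hcard]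
    ring

/-! ### The Selberg–Laguerre integral: recursion and logarithmic convexity -/

/-- The Selberg–Laguerre integral `∫ D(x)^s e^{-(x_1+⋯+x_n)} ω_k(x) dx` over the orthant. -/
noncomputable def SL (n : ℕ) (k s : ℝ) : ℝ := ∫ x in Rplus n, Wt n k s 1 0 x

lemma integrableOn_Wt (n : ℕ) {k s c : ℝ} (hk : 0 < k) (hs : 0 ≤ s) (hc : 0 < c) :
    IntegrableOn (Wt n k s c 0) (Rplus n) := by
  obtain ⟨N, hW⟩ := Wt_le n k s hk
  refine integrableOn_of_le _ N 1 c hc (measurable_Wt n k s c 0).aestronglyMeasurable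
    fun x hx => ?_
  rw [Real.norm_of_nonneg (Wt_nonneg n k s c le_rfl hx), one_mul]
  exact hW s c 0 hs le_rfl le_rfl zero_le_one x hx

lemma integrableOn_Wt_mul (n : ℕ) {k s c : ℝ} (hk : 0 < k) (hs : 0 ≤ s) (hc : 0 < c)
    (f : (Fin n → ℝ) → ℂ) (hf : Measurable f) (N : ℕ) (C : ℝ)
    (hb : ∀ x ∈ Rplus n, ‖f x‖ ≤ C * (1 + ∑ l, x l) ^ N) :
    IntegrableOn (fun x => (Wt n k s c 0 x : ℂ) * f x) (Rplus n) := by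
  obtain ⟨N₁, hW⟩ := Wt_le n k s hk
  refine integrableOn_of_le _ (N₁ + N) C c hc
    (Measurable.aestronglyMeasurable (by fun_prop)) fun x hx => ?_
  have hS := sum_nonneg_of_Rplus hx
  rw [norm_mul, Complex.norm_of_nonneg (Wt_nonneg n k s c le_rfl hx)]
  calc _ ≤ ((1 + ∑ l, x l) ^ N₁ * Real.exp (-c * ∑ l, x l)) * (C * (1 + ∑ l, x l) ^ N) := by
        gcongr
        · exact hW s c 0 hs le_rfl le_rfl zero_le_one x hx
        · exact hb x hx
    _ = _ := by ring

lemma norm_monomial_le {n : ℕ} {x : Fin n → ℝ} (hx : x ∈ Rplus n) (A : Finset (Fin n)) :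
    ‖∏ l ∈ A, (x l : ℂ)‖ ≤ (1 + ∑ l, x l) ^ n := by
  have hS := sum_nonneg_of_Rplus hx
  rw [norm_prod]
  calc ∏ l ∈ A, ‖(x l : ℂ)‖ ≤ ∏ l ∈ A, (1 + ∑ l, x l) := by
        refine Finset.prod_le_prod (fun _ _ => norm_nonneg _) fun l _ => ?_
        rw [Complex.norm_of_nonneg (hx l).le]
        linarith [le_sum_of_Rplus hx l]
    _ = (1 + ∑ l, x l) ^ A.card := by simp
    _ ≤ _ := pow_le_pow_right₀ (by linarith) (by simpa using A.card_le_univ)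

lemma prod_swap_of_mem {n : ℕ} (x : Fin n → ℝ) {A : Finset (Fin n)} {i j : Fin n} (hi : i ∉ A)
    (hj : j ∈ A) : ∏ l ∈ A, ((x ∘ Equiv.swap i j) l : ℂ) = x i * ∏ l ∈ A.erase j, (x l : ℂ) := by
  rw [← Finset.mul_prod_erase A _ hj]
  simp only [Function.comp, Equiv.swap_apply_right]
  congr 1
  refine Finset.prod_congr rfl fun l hl => ?_
  have h1 : l ≠ i := fun h => hi (by rw [← h]; exact Finset.mem_of_mem_erase hl)
  rw [Equiv.swap_apply_of_ne_of_ne h1 (Finset.ne_of_mem_erase hl)]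

lemma prod_swap_of_notMem {n : ℕ} (x : Fin n → ℝ) {A : Finset (Fin n)} {i j : Fin n} (hi : i ∉ A)
    (hj : j ∉ A) : ∏ l ∈ A, ((x ∘ Equiv.swap i j) l : ℂ) = ∏ l ∈ A, (x l : ℂ) := by
  refine Finset.prod_congr rfl fun l hl => ?_
  simp only [Function.comp]
  have h1 : l ≠ i := fun h => hi (by rwa [← h])
  have h2 : l ≠ j := fun h => hj (by rwa [← h])
  rw [Equiv.swap_apply_of_ne_of_ne h1 h2]

/-- Aomoto's recursion for the Selberg–Laguerre integrals of square-free monomials: integration by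
parts in a variable `x_i` not occurring in the monomial, where each of the `A.card` transpositions
moving `x_i` into it contributes `-k`. -/
lemma aomoto (n : ℕ) {k s : ℝ} (hk : 0 < k) (hs : 0 < s) (A : Finset (Fin n)) (i : Fin n)
    (hi : i ∉ A) :
    ∫ x in Rplus n, (Wt n k s 1 0 x : ℂ) * ∏ l ∈ insert i A, (x l : ℂ) =
      (s + 1 + k * (n - 1 - A.card)) *
        ∫ x in Rplus n, (Wt n k s 1 0 x : ℂ) * ∏ l ∈ A, (x l : ℂ) := by
  set f : (Fin n → ℝ) → ℂ := fun x => ∏ l ∈ A, (x l : ℂ) with hf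
  have hfm : Measurable f := by fun_prop
  have h := ibp n hk hs zero_lt_one i f (fun _ => 0) hfm measurable_const (fun x => by
      have e : ∀ t : ℝ, f (x + t • Pi.single i 1) = f x := by
        intro t
        refine Finset.prod_congr rfl fun l hl => ?_
        have : l ≠ i := fun h => hi (h ▸ hl)
        simp [this]
      unfold HasLineDerivAt
      simp_rw [e]
      exact hasDerivAt_const _ _) n 1 (fun x hx => by simpa [hf] using norm_monomial_le hx A)
    (fun x hx => by
      have hS := sum_nonneg_of_Rplus hx
      rw [norm_zero]; positivity)
    (fun x hx j => by
      have hS := sum_nonneg_of_Rplus hx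
      simp only [hf]
      by_cases hj : j ∈ A
      · rw [prod_swap_of_mem x hi hj, ← Finset.mul_prod_erase A _ hj, ← sub_mul, norm_mul,
          ← Complex.ofReal_sub, Complex.norm_real, Real.norm_eq_abs, abs_sub_comm, mul_comm, one_mul]
        gcongr
        exact norm_monomial_le hx _
      · rw [prod_swap_of_notMem x hi hj, sub_self, norm_zero]
        positivity)
  have hI : ∀ B : Finset (Fin n),
      IntegrableOn (fun x => (Wt n k s 1 0 x : ℂ) * ∏ l ∈ B, (x l : ℂ)) (Rplus n) := fun B =>
    integrableOn_Wt_mul n hk hs.le zero_lt_one _ (by fun_prop) n 1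
      fun x hx => by simpa using norm_monomial_le hx B
  have hIσ : ∀ j, IntegrableOn (fun x => (Wt n k s 1 0 x : ℂ) * f (x ∘ Equiv.swap i j)) (Rplus n) :=
    fun j => integrableOn_Wt_mul n hk hs.le zero_lt_one _ (by fun_prop) n 1 fun x hx => by
      have := norm_monomial_le (comp_perm_mem_Rplus hx (Equiv.swap i j)) A
      rw [sum_comp_perm] at this
      simpa [hf] using this
  have hσ : ∀ j, ∫ x in Rplus n, (Wt n k s 1 0 x : ℂ) * f (x ∘ Equiv.swap i j) =
      ∫ x in Rplus n, (Wt n k s 1 0 x : ℂ) * f x := by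
    intro j
    have := integral_perm (Equiv.swap i j) fun x => (Wt n k s 1 0 x : ℂ) * f x
    simp_rw [Wt_perm] at this
    exact this
  have hcongr : ∫ x in Rplus n, (((s : ℂ) + 1 + k * (n - 1)) * ((Wt n k s 1 0 x : ℂ) * f x) -
      (Wt n k s 1 0 x : ℂ) * ∏ l ∈ insert i A, (x l : ℂ)) -
      k * ∑ j ∈ A, (Wt n k s 1 0 x : ℂ) * f (x ∘ Equiv.swap i j) = 0 := by
    rw [← h]
    refine integral_congr_ae (ae_restrict_of_ae ((ae_injective n).mono fun x hinj => ?_))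
    have hsum : ∑ j ∈ univ.erase i, (x i : ℂ) *
        ((f x - f (x ∘ Equiv.swap i j)) / ((x i : ℂ) - (x j : ℂ))) =
        - ∑ j ∈ A, f (x ∘ Equiv.swap i j) := by
      rw [← Finset.sum_neg_distrib]
      symm
      have hsub : A ⊆ univ.erase i := fun j hj =>
        Finset.mem_erase.2 ⟨fun h => hi (h ▸ hj), Finset.mem_univ _⟩
      refine Finset.sum_subset_zero_on_sdiff hsub (fun j hj => ?_) (fun j hj => ?_)
      · have hjA : j ∉ A := (Finset.mem_sdiff.1 hj).2
        simp only [hf]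
        rw [prod_swap_of_notMem x hi hjA, sub_self, zero_div, mul_zero]
      · simp only [hf]
        have hne : (x i : ℂ) - x j ≠ 0 := sub_ne_zero.2 fun h =>
          hi ((hinj (by exact_mod_cast h) : i = j) ▸ hj)
        rw [prod_swap_of_mem x hi hj, ← Finset.mul_prod_erase A _ hj]
        field_simp
        ring
    rw [← Finset.mul_sum] at hsum
    have hW : ∑ j ∈ A, (Wt n k s 1 0 x : ℂ) * f (x ∘ Equiv.swap i j) =
        Wt n k s 1 0 x * ∑ j ∈ A, f (x ∘ Equiv.swap i j) := (Finset.mul_sum ..).symm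
    simp only [zero_add]
    rw [hW, Finset.prod_insert hi, Complex.ofReal_one]
    linear_combination (-(Wt n k s 1 0 x : ℂ) * k) * hsum
  rw [integral_sub, integral_sub, integral_const_mul, integral_const_mul, integral_finsetSum,
    Finset.sum_congr rfl (fun j _ => hσ j), Finset.sum_const, nsmul_eq_mul] at hcongr
  · linear_combination -hcongr
  · exact fun j _ => hIσ j
  · exact (hI A).const_mul _
  · exact hI _
  · exact ((hI A).const_mul _).sub (hI _)
  · exact (integrable_finsetSum _ fun j _ => hIσ j).const_mul _

/-- Functional equation in `s`, from adjoining all variables one at a time in `aomoto`. -/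
lemma SL_succ (n : ℕ) {k s : ℝ} (hk : 0 < k) (hs : 0 < s) :
    SL n k (s + 1) = (∏ j ∈ range n, (s + 1 + k * j)) * SL n k s := by
  have key : ∀ A : Finset (Fin n),
      ∫ x in Rplus n, (Wt n k s 1 0 x : ℂ) * ∏ l ∈ A, (x l : ℂ) =
        (∏ j ∈ range A.card, ((s : ℂ) + 1 + k * (n - 1 - j))) *
          ∫ x in Rplus n, (Wt n k s 1 0 x : ℂ) := by
    intro A
    induction A using Finset.induction_on with
    | empty => simp
    | insert i A hi ih =>
      rw [aomoto n hk hs A i hi, ih, Finset.card_insert_of_notMem hi, Finset.prod_range_succ]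
      ring
  have h := key univ
  rw [Finset.card_univ, Fintype.card_fin] at h
  have e1 : ∫ x in Rplus n, (Wt n k s 1 0 x : ℂ) * ∏ l, (x l : ℂ) = (SL n k (s + 1) : ℂ) := by
    unfold SL
    rw [← integral_complex_ofReal]
    refine setIntegral_congr_fun (measurableSet_Rplus n) fun x hx => ?_
    have : Wt n k (s + 1) 1 0 x = Wt n k s 1 0 x * ∏ l, x l := by
      unfold Wt
      simp_rw [Real.rpow_add_one (hx _).ne', Finset.prod_mul_distrib]
      ring
    simp [this]
  rw [e1, integral_complex_ofReal] at h
  have h' : SL n k (s + 1) = (∏ j ∈ range n, (s + 1 + k * ((n : ℝ) - 1 - j))) * SL n k s := by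
    unfold SL at h ⊢
    exact_mod_cast h
  rw [h', ← Finset.prod_range_reflect (fun j : ℕ => s + 1 + k * (j : ℝ))]
  congr 1
  refine Finset.prod_congr rfl fun j hj => ?_
  have : j < n := Finset.mem_range.1 hj
  rw [Nat.cast_sub (by omega), Nat.cast_sub (by omega)]
  simp

lemma ae_restrict_Wt_pos (n : ℕ) (k s : ℝ) :
    ∀ᵐ x ∂(volume.restrict (Rplus n)), 0 < Wt n k s 1 0 x := by
  refine (ae_restrict_iff' (measurableSet_Rplus n)).2 ((ae_injective n).mono fun x hx hxp => ?_)
  unfold Wt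
  have := om_pos n k x le_rfl (Or.inr hx)
  have h2 : 0 < ∏ l, x l ^ s := Finset.prod_pos fun l _ => Real.rpow_pos_of_pos (hxp l) _
  positivity

lemma SL_pos (n : ℕ) {k s : ℝ} (hk : 0 < k) (hs : 0 ≤ s) : 0 < SL n k s := by
  unfold SL
  rw [integral_pos_iff_support_of_nonneg_ae]
  · have h : Function.support (Wt n k s 1 0) =ᵐ[volume.restrict (Rplus n)] Set.univ := by
      filter_upwards [ae_restrict_Wt_pos n k s] with x hx
      exact propext ⟨fun _ => trivial, fun _ => hx.ne'⟩
    rw [measure_congr h, Measure.restrict_apply_univ]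
    exact (isOpen_Rplus n).measure_pos _ ⟨fun _ => 1, fun _ => one_pos⟩
  · filter_upwards [ae_restrict_Wt_pos n k s] with x hx using hx.le
  · exact integrableOn_Wt n hk hs zero_lt_one

/-- Hölder's inequality for the Selberg–Laguerre integral, via the pointwise weighted
arithmetic–geometric mean inequality applied to the normalized densities. -/
lemma SL_logconvex (n : ℕ) {k : ℝ} (hk : 0 < k) :
    ConvexOn ℝ (Set.Ioi 0) fun s => Real.log (SL n k s) := by
  refine ⟨convex_Ioi 0, fun s hs t ht a b ha hb hab => ?_⟩
  rw [Set.mem_Ioi] at hs ht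
  simp only [smul_eq_mul]
  have hu : 0 ≤ a * s + b * t := by positivity
  have hSs := SL_pos n hk hs.le
  have hSt := SL_pos n hk ht.le
  have hSu := SL_pos n hk hu
  have hIs := integrableOn_Wt n hk hs.le zero_lt_one
  have hIt := integrableOn_Wt n hk ht.le zero_lt_one
  have hle : SL n k (a * s + b * t) ≤ SL n k s ^ a * SL n k t ^ b := by
    have hpt : SL n k (a * s + b * t) ≤ ∫ x in Rplus n, (SL n k s ^ a * SL n k t ^ b) *
        (a * (Wt n k s 1 0 x / SL n k s) + b * (Wt n k t 1 0 x / SL n k t)) := by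
      refine setIntegral_mono_on_ae (integrableOn_Wt n hk hu zero_lt_one)
        ((((hIs.div_const _).const_mul a).add ((hIt.div_const _).const_mul b)).const_mul _)
        (measurableSet_Rplus n) (Filter.Eventually.of_forall fun x hx => ?_)
      have hws := Wt_nonneg n k s 1 le_rfl hx
      have hwt := Wt_nonneg n k t 1 le_rfl hx
      have hom := om_nonneg n k le_rfl x
      have e : Wt n k (a * s + b * t) 1 0 x = Wt n k s 1 0 x ^ a * Wt n k t 1 0 x ^ b := by
        have hps : ∀ r : ℝ, 0 ≤ ∏ l, x l ^ r := fun r =>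
          Finset.prod_nonneg fun l _ => Real.rpow_nonneg (hx l).le _
        unfold Wt
        rw [Real.mul_rpow (by have := hps s; positivity) hom,
          Real.mul_rpow (by have := hps t; positivity) hom,
          Real.mul_rpow (hps s) (Real.exp_nonneg _), Real.mul_rpow (hps t) (Real.exp_nonneg _),
          ← Real.finsetProd_rpow _ _ fun l _ => Real.rpow_nonneg (hx l).le _,
          ← Real.finsetProd_rpow _ _ fun l _ => Real.rpow_nonneg (hx l).le _]
        have hp : ∏ l, x l ^ (a * s + b * t) = (∏ l, (x l ^ s) ^ a) * ∏ l, (x l ^ t) ^ b := by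
          rw [← Finset.prod_mul_distrib]
          refine Finset.prod_congr rfl fun l _ => ?_
          rw [Real.rpow_add (hx l), ← Real.rpow_mul (hx l).le, ← Real.rpow_mul (hx l).le,
            mul_comm s, mul_comm t]
        have he : ∀ y : ℝ, 0 ≤ y → y = y ^ a * y ^ b := fun y hy => by
          rw [← Real.rpow_add_of_nonneg hy ha hb, hab, Real.rpow_one]
        rw [hp]
        conv_lhs => rw [he _ hom, he _ (Real.exp_nonneg (-1 * ∑ l, x l))]
        ring
      have ham := Real.geom_mean_le_arith_mean2_weighted ha hb (div_nonneg hws hSs.le)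
        (div_nonneg hwt hSt.le) hab
      rw [Real.div_rpow hws hSs.le, Real.div_rpow hwt hSt.le] at ham
      have h1 := Real.rpow_pos_of_pos hSs a
      have h2 := Real.rpow_pos_of_pos hSt b
      rw [e]
      calc _ = (SL n k s ^ a * SL n k t ^ b) *
            (Wt n k s 1 0 x ^ a / SL n k s ^ a * (Wt n k t 1 0 x ^ b / SL n k t ^ b)) := by
              field_simp
        _ ≤ _ := by gcongr
    refine hpt.trans_eq ?_
    rw [integral_const_mul, integral_add ((hIs.div_const _).const_mul a)
      ((hIt.div_const _).const_mul b), integral_const_mul, integral_const_mul, integral_div,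
      integral_div]
    change _ * (a * (SL n k s / SL n k s) + b * (SL n k t / SL n k t)) = _
    rw [div_self hSs.ne', div_self hSt.ne', mul_one, mul_one, hab, mul_one]
  calc _ ≤ Real.log (SL n k s ^ a * SL n k t ^ b) := Real.log_le_log hSu hle
    _ = _ := by
      rw [Real.log_mul (Real.rpow_pos_of_pos hSs a).ne' (Real.rpow_pos_of_pos hSt b).ne',
        Real.log_rpow hSs, Real.log_rpow hSt]

/-- Bohr–Mollerup uniqueness: two convex functions on `(0,∞)` with the same unit increments `p`,
where `p(x+1) - p(x) → 0`, differ by a constant. -/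
lemma convex_uniq {f g p : ℝ → ℝ} (hf : ConvexOn ℝ (Set.Ioi 0) f)
    (hg : ConvexOn ℝ (Set.Ioi 0) g) (hfp : ∀ x, 0 < x → f (x + 1) = f x + p x)
    (hgp : ∀ x, 0 < x → g (x + 1) = g x + p x)
    (hp : Filter.Tendsto (fun x => p (x + 1) - p x) Filter.atTop (nhds 0)) {x y : ℝ}
    (hx : 0 < x) (hy : 0 < y) : f x - g x = f y - g y := by
  -- by convexity the increment over `[x + 1, x + 1 + t]` lies between `t p(x)` and `t p(x + 1)`
  have chord : ∀ h : ℝ → ℝ, ConvexOn ℝ (Set.Ioi 0) h → (∀ x, 0 < x → h (x + 1) = h x + p x) →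
      ∀ x t, 0 < x → 0 < t → t < 1 → t * p x ≤ h (x + 1 + t) - h (x + 1) ∧
        h (x + 1 + t) - h (x + 1) ≤ t * p (x + 1) := by
    intro h hh hhp x t hx ht ht1
    have a := hh.slope_mono_adjacent (x := x) (y := x + 1) (z := x + 1 + t) hx
      (by simp only [Set.mem_Ioi]; linarith) (by linarith) (by linarith)
    have b := hh.secant_mono (a := x + 1) (x := x + 1 + t) (y := x + 1 + 1)
      (by simp only [Set.mem_Ioi]; linarith) (by simp only [Set.mem_Ioi]; linarith)
      (by simp only [Set.mem_Ioi]; linarith) (by linarith) (by linarith) (by linarith)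
    rw [hhp x hx] at a ⊢
    rw [hhp (x + 1) (by linarith), hhp x hx] at b
    have e1 : x + 1 - x = 1 := by ring
    have e2 : x + 1 + t - (x + 1) = t := by ring
    have e3 : x + 1 + 1 - (x + 1) = 1 := by ring
    rw [e1, e2, le_div_iff₀ ht] at a
    rw [e2, e3, div_le_iff₀ ht] at b
    constructor <;> linarith
  have per : ∀ x, 0 < x → ∀ N : ℕ, f (x + N) - g (x + N) = f x - g x := by
    intro x hx N
    induction N with
    | zero => simp
    | succ N ih =>
      have hN : 0 < x + N := by positivity
      push_cast
      rw [← add_assoc, hfp _ hN, hgp _ hN, ← ih]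
      ring
  -- the difference of increments is squeezed far out and transported back by periodicity
  have main : ∀ x t, 0 < x → 0 < t → t < 1 → f (x + t) - g (x + t) = f x - g x := by
    intro x t hx ht ht1
    have hlim : Filter.Tendsto (fun N : ℕ => p (x + N + 1) - p (x + N)) Filter.atTop (nhds 0) :=
      hp.comp (Filter.tendsto_atTop_add_const_left _ x tendsto_natCast_atTop_atTop)
    have hb : ∀ N : ℕ, |(f (x + t) - g (x + t)) - (f x - g x)| ≤
        p (x + N + 1) - p (x + N) := by
      intro N
      have hN : 0 < x + N := by positivity
      have h1 := chord f hf hfp (x + N) t hN ht ht1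
      have h2 := chord g hg hgp (x + N) t hN ht ht1
      have h3 := per x hx (N + 1)
      have h4 := per (x + t) (by linarith) (N + 1)
      push_cast at h3 h4
      rw [← add_assoc] at h3
      rw [show x + t + ((N : ℝ) + 1) = x + N + 1 + t by ring] at h4
      have h5 : 0 ≤ p (x + N + 1) - p (x + N) := by
        have : t * p (x + N) ≤ t * p (x + N + 1) := h1.1.trans h1.2
        have := le_of_mul_le_mul_left this ht
        linarith
      rw [← h3, ← h4, abs_le]
      constructor <;> nlinarith
    have := ge_of_tendsto' hlim hb
    have := abs_nonpos_iff.1 this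
    linarith
  wlog hxy : x ≤ y generalizing x y
  · exact (this hy hx (le_of_not_ge hxy)).symm
  have hfl : (0 : ℝ) ≤ y - x := by linarith
  set N := ⌊y - x⌋₊ with hN
  have h1 : (N : ℝ) ≤ y - x := Nat.floor_le hfl
  have h2 : y - x < N + 1 := Nat.lt_floor_add_one _
  rw [← per x hx N]
  rcases h1.eq_or_lt with h | h
  · rw [show y = x + N by linarith]
  · rw [← main (x + N) (y - x - N) (by positivity) (by linarith) (by linarith)]
    congr 2 <;> ring

/-! ### The Selberg–Laguerre integral: evaluation -/

lemma fubini_cons (n : ℕ) {F : (Fin (n + 1) → ℝ) → ℝ} (hF : IntegrableOn F (Rplus (n + 1))) :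
    (∀ᵐ y ∂(volume.restrict (Rplus n)),
      IntegrableOn (fun t : ℝ => F (Fin.cons t y)) (Set.Ioi 0)) ∧
    ∫ x in Rplus (n + 1), F x = ∫ y in Rplus n, ∫ t in Set.Ioi (0 : ℝ), F (Fin.cons t y) := by
  have mp := (volume_preserving_piFinSuccAbove (fun _ : Fin (n + 1) => ℝ) 0).symm
  set e : ℝ × (Fin n → ℝ) ≃ᵐ (Fin (n + 1) → ℝ) :=
    (MeasurableEquiv.piFinSuccAbove (fun _ => ℝ) 0).symm with he
  have hev : ∀ p : ℝ × (Fin n → ℝ), e p = Fin.cons p.1 p.2 := by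
    rintro ⟨t, y⟩
    rw [← Fin.insertNth_zero']
    rfl
  have hpre : e ⁻¹' (Rplus (n + 1)) = Set.Ioi 0 ×ˢ Rplus n := by
    ext ⟨t, y⟩
    rw [Set.mem_preimage, hev]
    simp [Rplus, Fin.forall_fin_succ]
  have h1 : IntegrableOn (F ∘ e) (e ⁻¹' (Rplus (n + 1))) :=
    (mp.integrableOn_comp_preimage e.measurableEmbedding).2 hF
  rw [hpre, IntegrableOn, Measure.volume_eq_prod, ← Measure.prod_restrict] at h1
  constructor
  · filter_upwards [h1.prod_left_ae] with y hy
    simp only [Function.comp, hev] at hy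
    exact hy
  · rw [← mp.setIntegral_preimage_emb e.measurableEmbedding, hpre, Measure.volume_eq_prod,
      ← Measure.prod_restrict]
    have h2 := integral_prod_symm _ h1
    simp only [Function.comp, hev] at h2
    simp only [hev]
    exact h2

lemma Wt_zero_hasDerivAt (n : ℕ) (k : ℝ) {ε : ℝ} (hε : 0 < ε) (y : Fin n → ℝ) (t : ℝ) :
    HasDerivAt (fun t => Wt (n + 1) k 0 1 ε (Fin.cons t y))
      (Wt (n + 1) k 0 1 ε (Fin.cons t y) *
        (-1 + 2 * k * ∑ j, th ε 0 j (Fin.cons t y : Fin (n + 1) → ℝ))) t := by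
  have h1 := om_hasDerivAt (n + 1) k hε (Fin.cons t y) 0
  simp only [Fin.update_cons_zero, Fin.cons_zero] at h1
  have h2 : HasDerivAt (fun t : ℝ => Real.exp (-1 * (t + ∑ l, y l)))
      (Real.exp (-1 * (t + ∑ l, y l)) * (-1)) t := by
    have := (((hasDerivAt_id t).add_const (∑ l, y l)).const_mul (-1)).exp
    simpa using this
  have h3 := h2.mul h1
  have e : ∀ t : ℝ, Wt (n + 1) k 0 1 ε (Fin.cons t y) =
      Real.exp (-1 * (t + ∑ l, y l)) * om (n + 1) k ε (Fin.cons t y) := by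
    intro t
    unfold Wt
    simp [Fin.sum_univ_succ]
  simp_rw [e]
  refine h3.congr_deriv ?_
  ring

lemma integrableOn_Wt_th (n : ℕ) {k ε : ℝ} (hk : 0 < k) (hε : 0 < ε) (hε1 : ε ≤ 1)
    (i j : Fin n) : IntegrableOn (fun x => Wt n k 0 1 ε x * th ε i j x) (Rplus n) := by
  obtain ⟨N, hW⟩ := Wt_le n k 0 hk
  refine integrableOn_of_le _ (N + 1) (1 / ε) 1 zero_lt_one
    (Measurable.aestronglyMeasurable (by fun_prop)) fun x hx => ?_
  have hS := sum_nonneg_of_Rplus hx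
  have h0 := Wt_nonneg n k 0 1 hε.le hx
  rw [norm_mul, Real.norm_of_nonneg h0, Real.norm_eq_abs]
  calc _ ≤ ((1 + ∑ l, x l) ^ N * Real.exp (-1 * ∑ l, x l)) * ((1 + ∑ l, x l) / ε) := by
        gcongr
        · exact hW 0 1 ε le_rfl le_rfl hε.le hε1 x hx
        · refine (abs_th_le hε i j x).trans ?_
          gcongr
          linarith [abs_sub_le_of_Rplus hx i j]
    _ = _ := by ring

lemma integrableOn_Wt_eps (n : ℕ) {k ε : ℝ} (hk : 0 < k) (hε : 0 < ε) (hε1 : ε ≤ 1) :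
    IntegrableOn (Wt n k 0 1 ε) (Rplus n) := by
  obtain ⟨N, hW⟩ := Wt_le n k 0 hk
  refine integrableOn_of_le _ N 1 1 zero_lt_one
    (Measurable.aestronglyMeasurable (by fun_prop)) fun x hx => ?_
  rw [Real.norm_of_nonneg (Wt_nonneg n k 0 1 hε.le hx), one_mul]
  exact hW 0 1 ε le_rfl le_rfl hε.le hε1 x hx

/-- Integrating the derivative of the regularized density in the first coordinate leaves only the
boundary face; the logarithmic derivative of the weight cancels by antisymmetry. -/
lemma boundary_eps (n : ℕ) {k ε : ℝ} (hk : 0 < k) (hε : 0 < ε) (hε1 : ε ≤ 1) :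
    ∫ x in Rplus (n + 1), Wt (n + 1) k 0 1 ε x =
      ∫ y in Rplus n, Wt (n + 1) k 0 1 ε (Fin.cons 0 y) := by
  have hG := integrableOn_Wt_eps (n + 1) hk hε hε1
  have hth : ∀ j, ∫ x in Rplus (n + 1), Wt (n + 1) k 0 1 ε x * th ε 0 j x = 0 := by
    intro j
    have := integral_eq_zero_of_antisymm (Equiv.swap 0 j)
      (fun x : Fin (n + 1) → ℝ => ((Wt (n + 1) k 0 1 ε x * th ε 0 j x : ℝ) : ℂ))
      (fun x => by rw [Wt_perm, th_swap]; push_cast; ring)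
    rw [integral_complex_ofReal] at this
    exact_mod_cast this
  have hG' : IntegrableOn (fun x => Wt (n + 1) k 0 1 ε x * (-1 + 2 * k * ∑ j, th ε 0 j x))
      (Rplus (n + 1)) := by
    have : (fun x => Wt (n + 1) k 0 1 ε x * (-1 + 2 * k * ∑ j, th ε 0 j x)) = fun x =>
        -Wt (n + 1) k 0 1 ε x + 2 * k * ∑ j, Wt (n + 1) k 0 1 ε x * th ε 0 j x := by
      ext x; rw [← Finset.mul_sum]; ring
    rw [this]
    exact hG.neg.add ((integrable_finsetSum _ fun j _ =>
      integrableOn_Wt_th (n + 1) hk hε hε1 0 j).const_mul _)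
  have h1 : ∫ x in Rplus (n + 1), Wt (n + 1) k 0 1 ε x * (-1 + 2 * k * ∑ j, th ε 0 j x) =
      -∫ x in Rplus (n + 1), Wt (n + 1) k 0 1 ε x := by
    calc _ = ∫ x in Rplus (n + 1), (-Wt (n + 1) k 0 1 ε x +
          2 * k * ∑ j, Wt (n + 1) k 0 1 ε x * th ε 0 j x) := by
          congr 1; ext x; rw [← Finset.mul_sum]; ring
      _ = _ := by
          have hn : IntegrableOn (fun x => -Wt (n + 1) k 0 1 ε x) (Rplus (n + 1)) := hG.neg
          rw [integral_add hn ((integrable_finsetSum _ fun j _ =>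
            integrableOn_Wt_th (n + 1) hk hε hε1 0 j).const_mul _), integral_const_mul,
            integral_finsetSum _ fun j _ => integrableOn_Wt_th (n + 1) hk hε hε1 0 j]
          simp [hth, integral_neg]
  obtain ⟨ha', hi'⟩ := fubini_cons n hG'
  obtain ⟨ha, -⟩ := fubini_cons n hG
  have h2 : ∀ᵐ y ∂(volume.restrict (Rplus n)), (∫ t in Set.Ioi (0 : ℝ),
      Wt (n + 1) k 0 1 ε (Fin.cons t y) * (-1 + 2 * k * ∑ j, th ε 0 j (Fin.cons t y))) =
      - Wt (n + 1) k 0 1 ε (Fin.cons 0 y) := by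
    filter_upwards [ha, ha'] with y hy hy'
    have hd := fun t : ℝ => Wt_zero_hasDerivAt n k hε y t
    have := integral_Ioi_of_hasDerivAt_of_tendsto' (fun t _ => hd t) hy'
      (tendsto_zero_of_hasDerivAt_of_integrableOn_Ioi (fun t _ => hd t) hy' hy)
    rw [this, zero_sub]
  rw [hi', integral_congr_ae h2, integral_neg] at h1
  linarith

/-- The bound of `Wt_le` extends by continuity to the boundary face `x_0 = 0`. -/
lemma Wt_cons_le (n : ℕ) {k ε : ℝ} (N : ℕ)
    (hW : ∀ s c ε : ℝ, 0 ≤ s → s ≤ 0 → 0 ≤ ε → ε ≤ 1 → ∀ x ∈ Rplus (n + 1),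
      Wt (n + 1) k s c ε x ≤ (1 + ∑ l, x l) ^ N * Real.exp (-c * ∑ l, x l))
    (hε : 0 < ε) (hε1 : ε ≤ 1) {y : Fin n → ℝ} (hy : y ∈ Rplus n) :
    Wt (n + 1) k 0 1 ε (Fin.cons 0 y) ≤ (1 + ∑ l, y l) ^ N * Real.exp (-1 * ∑ l, y l) := by
  have h1 : Filter.Tendsto (fun t => Wt (n + 1) k 0 1 ε (Fin.cons t y)) (nhdsWithin 0 (Set.Ioi 0))
      (nhds (Wt (n + 1) k 0 1 ε (Fin.cons 0 y))) :=
    (Wt_zero_hasDerivAt n k hε y 0).continuousAt.tendsto.mono_left nhdsWithin_le_nhds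
  have h2 : Filter.Tendsto (fun t : ℝ => (1 + (t + ∑ l, y l)) ^ N * Real.exp (-1 * (t + ∑ l, y l)))
      (nhdsWithin 0 (Set.Ioi 0))
      (nhds ((1 + (0 + ∑ l, y l)) ^ N * Real.exp (-1 * (0 + ∑ l, y l)))) := by
    refine (Continuous.tendsto (f := fun t : ℝ => (1 + (t + ∑ l, y l)) ^ N *
      Real.exp (-1 * (t + ∑ l, y l))) (by fun_prop) 0).mono_left nhdsWithin_le_nhds
  have h3 := le_of_tendsto_of_tendsto h1 h2 (by
    filter_upwards [self_mem_nhdsWithin] with t ht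
    have := hW 0 1 ε le_rfl le_rfl hε.le hε1 (Fin.cons t y)
      (by simpa [Rplus, Fin.forall_fin_succ] using ⟨ht, hy⟩)
    simpa [Fin.sum_univ_succ] using this)
  simpa using h3

/-- On the face `x_0 = 0` the factors `|x_0 - x_l|^{2k}` of the weight become `D(y)^{2k}`. -/
lemma Wt_cons_zero (n : ℕ) (k : ℝ) {y : Fin n → ℝ} (hy : y ∈ Rplus n) :
    Wt (n + 1) k 0 1 0 (Fin.cons 0 y) = Wt n k (2 * k) 1 0 y := by
  unfold Wt
  simp only [om_zero_eq_wk, wk, Fin.prod_univ_succ, Fin.sum_univ_succ, Fin.prod_Ioi_zero,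
    Fin.prod_Ioi_succ, Fin.cons_zero, Fin.cons_succ, Real.rpow_zero, Finset.prod_const_one,
    zero_sub, abs_neg, zero_add, one_mul]
  rw [Finset.prod_congr rfl fun l _ => by rw [abs_of_pos (hy l)]]
  ring

/-- Removing a variable: the value at `s = 0` of the integral in `n + 1` variables is the value at
`s = 2k` of the one in `n` variables. -/
lemma SL_boundary (n : ℕ) {k : ℝ} (hk : 0 < k) : SL (n + 1) k 0 = SL n k (2 * k) := by
  obtain ⟨N, hW⟩ := Wt_le (n + 1) k 0 hk
  have hev : ∀ᶠ ε : ℝ in nhdsWithin 0 (Set.Ioi 0), 0 < ε ∧ ε ≤ 1 := by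
    filter_upwards [Ioc_mem_nhdsGT (zero_lt_one' ℝ)] with ε h using h
  have h1 : Filter.Tendsto (fun ε => ∫ x in Rplus (n + 1), Wt (n + 1) k 0 1 ε x)
      (nhdsWithin 0 (Set.Ioi 0)) (nhds (SL (n + 1) k 0)) := by
    refine tendsto_integral_filter_of_dominated_convergence _ (Filter.Eventually.of_forall fun ε =>
      (measurable_Wt (n + 1) k 0 1 ε).aestronglyMeasurable) ?_
      (integrableOn_pow_exp (n + 1) N zero_lt_one) (ae_of_all _ fun x =>
      ((continuous_Wt_eps (n + 1) hk 0 1 x).tendsto 0).mono_left nhdsWithin_le_nhds)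
    filter_upwards [hev] with ε hε
    refine (ae_restrict_iff' (measurableSet_Rplus _)).2 (ae_of_all _ fun x hx => ?_)
    rw [Real.norm_of_nonneg (Wt_nonneg _ k 0 1 hε.1.le hx)]
    exact hW 0 1 ε le_rfl le_rfl hε.1.le hε.2 x hx
  have h2 : Filter.Tendsto (fun ε => ∫ y in Rplus n, Wt (n + 1) k 0 1 ε (Fin.cons 0 y))
      (nhdsWithin 0 (Set.Ioi 0)) (nhds (∫ y in Rplus n, Wt (n + 1) k 0 1 0 (Fin.cons 0 y))) := by
    refine tendsto_integral_filter_of_dominated_convergence _ (Filter.Eventually.of_forall fun ε =>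
      ((measurable_Wt (n + 1) k 0 1 ε).comp ?_).aestronglyMeasurable) ?_
      (integrableOn_pow_exp n N zero_lt_one) (ae_of_all _ fun x =>
      ((continuous_Wt_eps (n + 1) hk 0 1 _).tendsto 0).mono_left nhdsWithin_le_nhds)
    · refine measurable_pi_lambda _ fun i => ?_
      refine Fin.cases ?_ (fun j => ?_) i
      · simp
      · simp only [Fin.cons_succ]
        fun_prop
    filter_upwards [hev] with ε hε
    refine (ae_restrict_iff' (measurableSet_Rplus _)).2 (ae_of_all _ fun x hx => ?_)
    have h0 : 0 ≤ Wt (n + 1) k 0 1 ε (Fin.cons 0 x) := by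
      unfold Wt
      have := om_nonneg (n + 1) k hε.1.le (Fin.cons 0 x)
      simp only [Real.rpow_zero, Finset.prod_const_one]
      positivity
    rw [Real.norm_of_nonneg h0]
    exact Wt_cons_le n N hW hε.1 hε.2 hx
  have h3 : ∫ y in Rplus n, Wt (n + 1) k 0 1 0 (Fin.cons 0 y) = SL n k (2 * k) :=
    setIntegral_congr_fun (measurableSet_Rplus n) fun y hy => Wt_cons_zero n k hy
  rw [h3] at h2
  refine tendsto_nhds_unique h1 (h2.congr' ?_)
  filter_upwards [hev] with ε hε using (boundary_eps n hk hε.1 hε.2).symm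

lemma SL_tendsto_zero (n : ℕ) {k : ℝ} (hk : 0 < k) :
    Filter.Tendsto (SL n k) (nhdsWithin 0 (Set.Ioi 0)) (nhds (SL n k 0)) := by
  obtain ⟨N, hW⟩ := Wt_le n k 1 hk
  refine tendsto_integral_filter_of_dominated_convergence _ (Filter.Eventually.of_forall fun s =>
      (measurable_Wt n k s 1 0).aestronglyMeasurable) ?_
      (integrableOn_pow_exp n N zero_lt_one) ?_
  · filter_upwards [Ioc_mem_nhdsGT (zero_lt_one' ℝ)] with s hs
    refine (ae_restrict_iff' (measurableSet_Rplus _)).2 (ae_of_all _ fun x hx => ?_)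
    rw [Real.norm_of_nonneg (Wt_nonneg _ k s 1 le_rfl hx)]
    exact hW s 1 0 hs.1.le hs.2 le_rfl zero_le_one x hx
  · refine (ae_restrict_iff' (measurableSet_Rplus _)).2 (ae_of_all _ fun x hx => ?_)
    refine (Continuous.tendsto (f := fun s => Wt n k s 1 0 x) ?_ 0).mono_left nhdsWithin_le_nhds
    unfold Wt
    refine (Continuous.mul (continuous_finsetProd _ fun l _ => ?_) continuous_const).mul
      continuous_const
    exact Real.continuous_const_rpow (hx l).ne'

/-- The product of Gamma functions in the Selberg–Laguerre formula. -/
noncomputable def GP (n : ℕ) (k s : ℝ) : ℝ := ∏ j ∈ range n, Real.Gamma (s + 1 + k * j)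

lemma GP_pos (n : ℕ) {k s : ℝ} (hk : 0 < k) (hs : 0 ≤ s) : 0 < GP n k s :=
  Finset.prod_pos fun j _ => Real.Gamma_pos_of_pos (by positivity)

/-- Both sides satisfy the same functional equation and are logarithmically convex, hence are
proportional in `s`. -/
lemma SL_ratio (n : ℕ) {k s t : ℝ} (hk : 0 < k) (hs : 0 < s) (ht : 0 < t) :
    SL n k s * GP n k t = SL n k t * GP n k s := by
  have hg : ∀ s : ℝ, 0 < s → Real.log (GP n k s) =
      ∑ j ∈ range n, Real.log (Real.Gamma (s + 1 + k * j)) := fun s hs =>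
    Real.log_prod fun j _ => (Real.Gamma_pos_of_pos (by positivity)).ne'
  have hconv : ConvexOn ℝ (Set.Ioi 0) fun s => Real.log (GP n k s) := by
    have hsum : ∀ m : ℕ, ConvexOn ℝ (Set.Ioi 0)
        fun s => ∑ j ∈ range m, Real.log (Real.Gamma (s + 1 + k * j)) := by
      intro m
      induction m with
      | zero => simpa using convexOn_const 0 (convex_Ioi (0 : ℝ))
      | succ m ih =>
        simp_rw [Finset.sum_range_succ]
        refine ih.add ?_
        have h := Real.convexOn_log_Gamma.translate_right (1 + k * m)
        refine (h.subset (fun s hs => ?_) (convex_Ioi 0)).congr fun s _ => ?_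
        · rw [Set.mem_Ioi] at hs
          simp only [Set.mem_preimage, Set.mem_Ioi]
          positivity
        · simp only [Function.comp]
          congr 2
          ring
    exact (hsum n).congr fun s hs => (hg s hs).symm
  have h := convex_uniq (p := fun x => ∑ j ∈ range n, Real.log (x + 1 + k * j))
    (SL_logconvex n hk) hconv (fun x hx => ?_) (fun x hx => ?_) ?_ hs ht
  · have h1 := SL_pos n hk hs.le
    have h2 := SL_pos n hk ht.le
    have h3 := GP_pos n hk hs.le
    have h4 := GP_pos n hk ht.le
    apply Real.log_injOn_pos (Set.mem_Ioi.2 (by positivity)) (Set.mem_Ioi.2 (by positivity))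
    rw [Real.log_mul h1.ne' h4.ne', Real.log_mul h2.ne' h3.ne']
    linarith
  · rw [SL_succ n hk hx, Real.log_mul (Finset.prod_pos fun j _ => by positivity).ne'
      (SL_pos n hk hx.le).ne', Real.log_prod fun j _ => by positivity, add_comm]
  · rw [hg x hx, hg (x + 1) (by linarith), ← Finset.sum_add_distrib]
    refine Finset.sum_congr rfl fun j _ => ?_
    have h0 : 0 < x + 1 + k * j := by positivity
    rw [show x + 1 + 1 + k * (j : ℝ) = x + 1 + k * j + 1 by ring, Real.Gamma_add_one h0.ne',
      Real.log_mul h0.ne' (Real.Gamma_pos_of_pos h0).ne', add_comm]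
  · simp_rw [← Finset.sum_sub_distrib]
    rw [← Finset.sum_const_zero (s := range n)]
    refine tendsto_finsetSum _ fun j _ => ?_
    have := (Real.tendsto_log_comp_add_sub_log 1).comp
      (Filter.tendsto_atTop_add_const_right Filter.atTop (1 + k * (j : ℝ)) Filter.tendsto_id)
    refine this.congr fun x => ?_
    simp only [Function.comp, id]
    congr 2 <;> ring

lemma SL_eq_mul_GP (n : ℕ) {k s : ℝ} (hk : 0 < k) (hs : 0 < s) :
    SL n k s * GP n k 0 = SL n k 0 * GP n k s := by
  have hG : Filter.Tendsto (GP n k) (nhdsWithin 0 (Set.Ioi 0)) (nhds (GP n k 0)) := by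
    refine Filter.Tendsto.mono_left (ContinuousAt.tendsto ?_) nhdsWithin_le_nhds
    unfold GP
    refine tendsto_finsetProd _ fun j _ => ?_
    have hG : ContinuousAt Real.Gamma (0 + 1 + k * (j : ℝ)) :=
      (Real.differentiableAt_Gamma fun m => by
        have : 0 < 0 + 1 + k * (j : ℝ) := by positivity
        have : (0 : ℝ) ≤ m := by positivity
        linarith).continuousAt
    exact ContinuousAt.comp (f := fun s : ℝ => s + 1 + k * j) hG (by fun_prop)
  refine tendsto_nhds_unique (hG.const_mul (SL n k s))
    (((SL_tendsto_zero n hk).mul_const (GP n k s)).congr' ?_)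
  filter_upwards [self_mem_nhdsWithin] with t ht using (SL_ratio n hk hs ht).symm

/-- The proportionality constant, by induction on `n`: the step combines `SL_boundary` with
`SL_eq_mul_GP` at `s = 2k`. -/
lemma SL_zero_eq (n : ℕ) {k : ℝ} (hk : 0 < k) : SL n k 0 = dnk n k * GP n k 0 := by
  induction n with
  | zero =>
    have : Rplus 0 = Set.univ := by ext x; simp [Rplus]
    simp [SL, dnk, GP, Wt, om, this, measureReal_def, Measure.volume_pi_eq_dirac fun _ => (0 : ℝ)]
  | succ n ih =>
    have h0 := (GP_pos n hk le_rfl).ne'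
    have h1 := SL_eq_mul_GP n hk (mul_pos two_pos hk)
    rw [ih] at h1
    have h2 : SL n k (2 * k) = dnk n k * GP n k (2 * k) := by
      apply mul_right_cancel₀ h0
      linarith
    have h3 : GP n k (2 * k) * Real.Gamma (1 + k) =
        GP (n + 1) k 0 * Real.Gamma (1 + (n + 1) * k) := by
      have e : ∀ j : ℕ, 2 * k + 1 + k * (j : ℝ) = 0 + 1 + k * ((j + 1 + 1 : ℕ) : ℝ) := by
        intro j; push_cast; ring
      have : GP (n + 1 + 1) k 0 = GP (n + 1) k 0 * Real.Gamma (1 + (n + 1) * k) := by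
        unfold GP
        rw [Finset.prod_range_succ]
        congr 2
        push_cast; ring
      rw [← this]
      unfold GP
      rw [Finset.prod_range_succ', Finset.prod_range_succ']
      simp_rw [e]
      simp
    have hk1 : Real.Gamma (1 + k) ≠ 0 := (Real.Gamma_pos_of_pos (by positivity)).ne'
    rw [SL_boundary n hk, h2]
    have h4 : dnk (n + 1) k = dnk n k * (Real.Gamma (1 + (n + 1) * k) / Real.Gamma (1 + k)) := by
      unfold dnk
      rw [Finset.prod_range_succ]
    have h5 : GP n k (2 * k) =
        GP (n + 1) k 0 * (Real.Gamma (1 + (n + 1) * k) / Real.Gamma (1 + k)) := by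
      rw [← mul_div_assoc, eq_div_iff hk1, h3]
    rw [h4, h5]
    ring

/-- The Selberg–Laguerre integral in closed form. -/
lemma SL_eq (n : ℕ) {k s : ℝ} (hk : 0 < k) (hs : 0 < s) : SL n k s = dnk n k * GP n k s := by
  apply mul_right_cancel₀ (GP_pos n hk le_rfl).ne'
  rw [SL_eq_mul_GP n hk hs, SL_zero_eq n hk]
  ring

/-! ### The Laplace transform of the density -/

section Laplace

variable {n : ℕ} {k : ℝ} {z : Fin n → ℂ} {ψ : SchwartzMap (Fin n → ℝ) ℂ}

lemma schwartz_bounds (ψ : SchwartzMap (Fin n → ℝ) ℂ) : ∃ C : ℝ, 0 ≤ C ∧ (∀ x, ‖ψ x‖ ≤ C) ∧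
    ∀ x, ‖fderiv ℝ ψ x‖ ≤ C := by
  obtain ⟨A, hA, hA'⟩ := ψ.decay 0 0
  obtain ⟨B, hB, hB'⟩ := ψ.decay 0 1
  refine ⟨A + B, by positivity, fun x => ?_, fun x => ?_⟩
  · have := hA' x
    rw [pow_zero, one_mul, norm_iteratedFDeriv_zero] at this
    linarith
  · have := hB' x
    rw [pow_zero, one_mul, norm_iteratedFDeriv_one] at this
    linarith

lemma integrableOn_Wt_schwartz {s c : ℝ} (hk : 0 < k) (hs : 0 < s) (hc : 0 < c) :
    IntegrableOn (fun x => (Wt n k s c 0 x : ℂ) * ψ x) (Rplus n) := by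
  obtain ⟨C, -, hC, -⟩ := schwartz_bounds ψ
  exact integrableOn_Wt_mul n hk hs.le hc ψ ψ.continuous.measurable 0 C
    fun x _ => by simpa using hC x

lemma integrableOn_Wt_coord_schwartz {s c : ℝ} (hk : 0 < k) (hs : 0 < s) (hc : 0 < c)
    (i : Fin n) : IntegrableOn (fun x => (Wt n k s c 0 x : ℂ) * (x i * ψ x)) (Rplus n) := by
  obtain ⟨C, hC0, hC, -⟩ := schwartz_bounds ψ
  have hm : Measurable ψ := ψ.continuous.measurable
  refine integrableOn_Wt_mul n hk hs.le hc _ (by fun_prop) 1 C fun x hx => ?_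
  have hS := sum_nonneg_of_Rplus hx
  rw [norm_mul, Complex.norm_of_nonneg (hx i).le, pow_one, mul_comm C]
  exact mul_le_mul (by linarith [le_sum_of_Rplus hx i]) (hC x) (norm_nonneg _) (by linarith)

/-- The Dunkl eigenvalue equation turns integration by parts into a first-order recursion for the
first moments of `ψ`. -/
lemma moment_eq {s c : ℝ} (hk : 0 < k) (hs : 0 < s) (hc : 0 < c)
    (hT : ∀ x ∈ Rplus n, Function.Injective x → ∀ i, dunklOp n k i ψ x = -z i * ψ x) (i : Fin n) :
    (z i + c) * ∫ x in Rplus n, (Wt n k s c 0 x : ℂ) * (x i * ψ x) =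
      (s + 1 + k * (n - 1)) * ∫ x in Rplus n, (Wt n k s c 0 x : ℂ) * ψ x := by
  obtain ⟨C, hC0, hC, hC'⟩ := schwartz_bounds ψ
  have hm : Measurable ψ := ψ.continuous.measurable
  have h := ibp n hk hs hc i ψ (fun x => fderiv ℝ ψ x (Pi.single i 1)) hm
    (measurable_fderiv_apply_const ℝ ψ _)
    (fun x => (ψ.differentiableAt.hasFDerivAt).hasLineDerivAt _) 0 C
    (fun x _ => by simpa using hC x)
    (fun x _ => by
      refine ((fderiv ℝ ψ x).le_opNorm _).trans ?_
      rw [Pi.norm_single]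
      simpa using hC' x)
    (fun x _ j => by
      have h1 := convex_univ.norm_image_sub_le_of_norm_fderiv_le (𝕜 := ℝ) (f := ψ)
        (fun x _ => ψ.differentiableAt) (fun x _ => hC' x) (Set.mem_univ (x ∘ Equiv.swap i j))
        (Set.mem_univ x)
      have h2 : ‖x - x ∘ Equiv.swap i j‖ ≤ |x i - x j| := by
        refine (pi_norm_le_iff_of_nonneg (abs_nonneg _)).2 fun l => ?_
        simp only [Pi.sub_apply, Function.comp, Real.norm_eq_abs]
        rcases eq_or_ne l i with rfl | hi
        · simp
        rcases eq_or_ne l j with rfl | hj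
        · rw [Equiv.swap_apply_right, abs_sub_comm]
        · rw [Equiv.swap_apply_of_ne_of_ne hi hj]
          simp
      simp only [pow_zero, mul_one]
      exact h1.trans (by gcongr))
  have hcongr : ∫ x in Rplus n, (((s : ℂ) + 1 + k * (n - 1)) * ((Wt n k s c 0 x : ℂ) * ψ x) -
      (z i + c) * ((Wt n k s c 0 x : ℂ) * (x i * ψ x))) = 0 := by
    rw [← h]
    refine integral_congr_ae ((ae_restrict_iff' (measurableSet_Rplus n)).2
      ((ae_injective n).mono fun x hinj hx => ?_))
    have hTx := hT x hx hinj i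
    unfold dunklOp at hTx
    simp only
    rw [hTx]
    ring
  rw [integral_sub ((integrableOn_Wt_schwartz hk hs hc).const_mul _)
    ((integrableOn_Wt_coord_schwartz hk hs hc i).const_mul _), integral_const_mul,
    integral_const_mul] at hcongr
  linear_combination -hcongr

lemma hasDerivAt_laplace {s c : ℝ} (hk : 0 < k) (hs : 0 < s) (hc : 0 < c) :
    HasDerivAt (fun c : ℝ => ∫ x in Rplus n, (Wt n k s c 0 x : ℂ) * ψ x)
      (-∑ l, ∫ x in Rplus n, (Wt n k s c 0 x : ℂ) * (x l * ψ x)) c := by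
  obtain ⟨C, hC0, hC, -⟩ := schwartz_bounds ψ
  obtain ⟨N, hW⟩ := Wt_le n k s hk
  have hm : Measurable ψ := ψ.continuous.measurable
  have h := hasDerivAt_integral_of_dominated_loc_of_deriv_le (μ := volume.restrict (Rplus n))
    (F := fun (c : ℝ) x => (Wt n k s c 0 x : ℂ) * ψ x)
    (F' := fun (c : ℝ) x => -∑ l, (Wt n k s c 0 x : ℂ) * (x l * ψ x)) (x₀ := c)
    (s := Set.Ioi (c / 2))
    (bound := fun x => C * ((1 + ∑ l, x l) ^ (N + 1) * Real.exp (-(c / 2) * ∑ l, x l)))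
    (Ioi_mem_nhds (by linarith)) (Filter.Eventually.of_forall fun c =>
      Measurable.aestronglyMeasurable (by fun_prop)) (integrableOn_Wt_schwartz hk hs hc)
    (Measurable.aestronglyMeasurable (by fun_prop)) ?_
    ((integrableOn_pow_exp n (N + 1) (half_pos hc)).const_mul C) ?_
  · have h2 := h.2
    rwa [integral_neg, integral_finsetSum _ fun l _ =>
      integrableOn_Wt_coord_schwartz hk hs hc l] at h2
  · refine (ae_restrict_iff' (measurableSet_Rplus n)).2 (ae_of_all _ fun x hx t ht => ?_)
    have hS := sum_nonneg_of_Rplus hx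
    have e : ∑ l, (Wt n k s t 0 x : ℂ) * (x l * ψ x) =
        (Wt n k s t 0 x : ℂ) * (((∑ l, x l : ℝ) : ℂ) * ψ x) := by
      push_cast
      rw [Finset.sum_mul, Finset.mul_sum]
    rw [norm_neg, e, norm_mul, norm_mul, Complex.norm_of_nonneg (Wt_nonneg n k s t le_rfl hx),
      Complex.norm_of_nonneg hS]
    have h1 : Real.exp (-t * ∑ l, x l) ≤ Real.exp (-(c / 2) * ∑ l, x l) := by
      apply Real.exp_le_exp.2
      have : c / 2 < t := ht
      nlinarith
    calc _ ≤ ((1 + ∑ l, x l) ^ N * Real.exp (-(c / 2) * ∑ l, x l)) * ((1 + ∑ l, x l) * C) := by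
          gcongr
          · exact (hW s t 0 hs.le le_rfl le_rfl zero_le_one x hx).trans (by gcongr)
          · linarith
          · exact hC x
      _ = _ := by ring
  · refine ae_of_all _ fun x t _ => ?_
    have h1 : HasDerivAt (fun t => Wt n k s t 0 x) (Wt n k s t 0 x * (-∑ l, x l)) t := by
      unfold Wt
      have h2 : HasDerivAt (fun t : ℝ => Real.exp (-t * ∑ l, x l))
          (Real.exp (-t * ∑ l, x l) * (-1 * ∑ l, x l)) t :=
        ((hasDerivAt_id t).neg.mul_const _).exp
      refine ((h2.const_mul _).mul_const _).congr_deriv ?_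
      ring
    refine (h1.ofReal_comp.mul_const (ψ x)).congr_deriv ?_
    push_cast
    rw [mul_assoc, neg_mul, Finset.sum_mul, mul_neg, Finset.mul_sum]

/-- The damped integral solves a first-order linear equation in `c`, because its derivative is minus the
sum of the first moments given by `moment_eq`; `∏ (z_l + c)^m` is the integrating factor. -/
lemma laplace_mul_const {s : ℝ} (hk : 0 < k) (hs : 0 < s) (hz : ∀ i, 0 < (z i).re)
    (hT : ∀ x ∈ Rplus n, Function.Injective x → ∀ i, dunklOp n k i ψ x = -z i * ψ x)
    {a b : ℝ} (ha : 0 < a) (hb : 0 < b) :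
    (∫ x in Rplus n, (Wt n k s a 0 x : ℂ) * ψ x) *
        Complex.exp ((s + 1 + k * (n - 1)) * ∑ l, Complex.log (z l + a)) =
      (∫ x in Rplus n, (Wt n k s b 0 x : ℂ) * ψ x) *
        Complex.exp ((s + 1 + k * (n - 1)) * ∑ l, Complex.log (z l + b)) := by
  have hd : ∀ c ∈ Set.Ioi (0 : ℝ), HasDerivAt (fun c : ℝ =>
      (∫ x in Rplus n, (Wt n k s c 0 x : ℂ) * ψ x) *
        Complex.exp ((s + 1 + k * (n - 1)) * ∑ l, Complex.log (z l + c))) 0 c := by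
    intro c hc
    have hc' : 0 < c := hc
    have hne : ∀ l, z l + c ≠ 0 := fun l h => by
      have := congrArg Complex.re h
      simp at this
      linarith [hz l]
    have h1 := hasDerivAt_laplace (n := n) (ψ := ψ) hk hs hc'
    have h2 : HasDerivAt (fun c : ℝ => ∑ l, Complex.log (z l + c)) (∑ l, 1 / (z l + c)) c := by
      refine HasDerivAt.fun_sum fun l _ => ?_
      have h3 : HasDerivAt (fun c : ℝ => z l + (c : ℂ)) 1 c :=
        (Complex.ofRealCLM.hasDerivAt (x := c)).const_add _
      exact h3.clog_real (Or.inl (by simp; linarith [hz l]))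
    refine (h1.mul ((h2.const_mul ((s : ℂ) + 1 + k * (n - 1))).cexp)).congr_deriv ?_
    have h4 : ∑ l, ∫ x in Rplus n, (Wt n k s c 0 x : ℂ) * (x l * ψ x) =
        ((s + 1 + k * (n - 1)) * ∑ l, 1 / (z l + c)) *
          ∫ x in Rplus n, (Wt n k s c 0 x : ℂ) * ψ x := by
      rw [Finset.mul_sum, Finset.sum_mul]
      refine Finset.sum_congr rfl fun l _ => ?_
      have h5 := moment_eq hk hs hc' hT l
      have h6 := hne l
      have h7 : ∫ x in Rplus n, (Wt n k s c 0 x : ℂ) * (x l * ψ x) =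
          ((s + 1 + k * (n - 1)) * ∫ x in Rplus n, (Wt n k s c 0 x : ℂ) * ψ x) / (z l + c) := by
        rw [eq_div_iff h6]
        linear_combination h5
      rw [h7]
      ring
    rw [h4]
    ring
  exact isOpen_Ioi.is_const_of_deriv_eq_zero isPreconnected_Ioi
    (fun c hc => (hd c hc).differentiableAt.differentiableWithinAt) (fun c hc => (hd c hc).deriv)
    ha hb

lemma integrable_pow_schwartz (N : ℕ) :
    IntegrableOn (fun x => (1 + ∑ l, x l) ^ N * ‖ψ x‖) (Rplus n) := by
  have h1 : Integrable (fun x => ((n : ℝ) + 1) ^ N * (2 ^ (N - 1) * (‖x‖ ^ 0 * ‖ψ x‖ +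
      ‖x‖ ^ N * ‖ψ x‖))) :=
    (((ψ.integrable_pow_mul volume 0).add (ψ.integrable_pow_mul volume N)).const_mul _).const_mul _
  have hm : Measurable ψ := ψ.continuous.measurable
  refine h1.integrableOn.mono' (Measurable.aestronglyMeasurable (by fun_prop))
    ((ae_restrict_iff' (measurableSet_Rplus n)).2 (ae_of_all _ fun x hx => ?_))
  have hS := sum_nonneg_of_Rplus hx
  have h2 : ∑ l, x l ≤ n * ‖x‖ := by
    calc ∑ l, x l ≤ ∑ l : Fin n, ‖x‖ :=
          Finset.sum_le_sum fun l _ => (le_abs_self _).trans (norm_le_pi_norm x l)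
      _ = _ := by simp
  have h3 := norm_nonneg x
  have h4 := add_pow_le zero_le_one h3 N
  rw [Real.norm_of_nonneg (by positivity)]
  calc _ ≤ ((n + 1) * (1 + ‖x‖)) ^ N * ‖ψ x‖ := by
        gcongr
        nlinarith [(Nat.cast_nonneg n : (0 : ℝ) ≤ n)]
    _ = (n + 1) ^ N * ((1 + ‖x‖) ^ N * ‖ψ x‖) := by rw [mul_pow, mul_assoc]
    _ ≤ (n + 1) ^ N * (2 ^ (N - 1) * (1 ^ N + ‖x‖ ^ N) * ‖ψ x‖) := by gcongr
    _ = _ := by rw [one_pow, pow_zero]; ring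

lemma laplace_tendsto_zero {s : ℝ} (hk : 0 < k) (hs : 0 < s) :
    Filter.Tendsto (fun c : ℝ => ∫ x in Rplus n, (Wt n k s c 0 x : ℂ) * ψ x)
      (nhdsWithin 0 (Set.Ioi 0)) (nhds (∫ x in Rplus n, (Wt n k s 0 0 x : ℂ) * ψ x)) := by
  obtain ⟨N, hW⟩ := Wt_le n k s hk
  have hm : Measurable ψ := ψ.continuous.measurable
  refine tendsto_integral_filter_of_dominated_convergence _ (Filter.Eventually.of_forall fun c =>
    Measurable.aestronglyMeasurable (by fun_prop)) ?_ (integrable_pow_schwartz (ψ := ψ) N)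
    (ae_of_all _ fun x => ?_)
  · filter_upwards [self_mem_nhdsWithin] with c hc
    refine (ae_restrict_iff' (measurableSet_Rplus n)).2 (ae_of_all _ fun x hx => ?_)
    have hS := sum_nonneg_of_Rplus hx
    have hc' : 0 < c := hc
    rw [norm_mul, Complex.norm_of_nonneg (Wt_nonneg n k s c le_rfl hx)]
    gcongr
    refine (hW s c 0 hs.le le_rfl le_rfl zero_le_one x hx).trans ?_
    refine mul_le_of_le_one_right (by positivity) (Real.exp_le_one_iff.2 ?_)
    nlinarith
  · refine (Continuous.tendsto (f := fun c => (Wt n k s c 0 x : ℂ) * ψ x) ?_ 0).mono_left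
      nhdsWithin_le_nhds
    unfold Wt
    fun_prop

/-- The Dunkl weight is homogeneous of degree `k n (n - 1)`. -/
lemma om_smul {r : ℝ} (hr : 0 < r) (x : Fin n → ℝ) :
    om n k 0 (r • x) = r ^ (k * (n * (n - 1))) * om n k 0 x := by
  have h1 : ∀ a b : Fin n, (if a = b then 1 else (((r • x) a - (r • x) b) ^ 2 + 0) ^ (k / 2)) =
      (if a = b then 1 else r ^ k) *
        (if a = b then 1 else ((x a - x b) ^ 2 + 0) ^ (k / 2)) := by
    intro a b
    split_ifs
    · simp
    · simp only [Pi.smul_apply, smul_eq_mul, add_zero]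
      rw [← mul_sub, mul_pow, Real.mul_rpow (by positivity) (by positivity), ← Real.rpow_natCast,
        ← Real.rpow_mul hr.le]
      congr 2
      push_cast
      ring
  have h2 : ∀ a : Fin n, ∏ b, (if a = b then 1 else r ^ k) = r ^ (k * ((n : ℝ) - 1)) := by
    intro a
    have hk0 : r ^ k ≠ 0 := (Real.rpow_pos_of_pos hr k).ne'
    apply mul_right_cancel₀ hk0
    have e : (∏ b, (if a = b then 1 else r ^ k)) * ∏ b, (if a = b then r ^ k else 1) =
        ∏ b : Fin n, r ^ k := by
      rw [← Finset.prod_mul_distrib]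
      refine Finset.prod_congr rfl fun b _ => ?_
      split_ifs <;> simp
    rw [Finset.prod_ite_eq, if_pos (Finset.mem_univ a)] at e
    rw [e, ← Real.rpow_add hr, Finset.prod_const, Finset.card_univ, Fintype.card_fin,
      ← Real.rpow_natCast, ← Real.rpow_mul hr.le]
    congr 1
    ring
  unfold om
  simp_rw [h1, Finset.prod_mul_distrib, h2]
  rw [Finset.prod_const, Finset.card_univ, Fintype.card_fin, ← Real.rpow_natCast,
    ← Real.rpow_mul hr.le]
  congr 2
  ring

lemma Wt_smul {s c r : ℝ} (hr : 0 < r) {x : Fin n → ℝ} (hx : x ∈ Rplus n) :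
    Wt n k s c 0 (r • x) = r ^ (n * (s + k * (n - 1))) * Wt n k s (c * r) 0 x := by
  have h1 : ∏ l, (r • x) l ^ s = r ^ (n * s) * ∏ l, x l ^ s := by
    simp only [Pi.smul_apply, smul_eq_mul]
    rw [Finset.prod_congr rfl fun l _ => Real.mul_rpow hr.le (hx l).le, Finset.prod_mul_distrib,
      Finset.prod_const, Finset.card_univ, Fintype.card_fin, ← Real.rpow_natCast,
      ← Real.rpow_mul hr.le, mul_comm s]
  have h2 : -c * ∑ l, (r • x) l = -(c * r) * ∑ l, x l := by
    simp only [Pi.smul_apply, smul_eq_mul]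
    rw [← Finset.mul_sum]
    ring
  have h3 : r ^ (n * (s + k * (n - 1))) = r ^ (n * s) * r ^ (k * (n * (n - 1))) := by
    rw [← Real.rpow_add hr]
    congr 1
    ring
  unfold Wt
  rw [h1, h2, h3, om_smul hr]
  ring

open scoped Pointwise in
/-- Rescaling by `c` concentrates `ψ` at the origin. -/
lemma laplace_scale {s c : ℝ} (hc : 0 < c) :
    (((c ^ (n * (s + 1 + k * (n - 1))) : ℝ)) : ℂ) *
        ∫ x in Rplus n, (Wt n k s c 0 x : ℂ) * ψ x =
      ∫ x in Rplus n, (Wt n k s 1 0 x : ℂ) * ψ (c⁻¹ • x) := by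
  have hc' : 0 < c⁻¹ := inv_pos.2 hc
  have h := Measure.setIntegral_comp_smul_of_pos volume
    (fun x => (Wt n k s c 0 x : ℂ) * ψ x) (Rplus n) hc'
  have hset : c⁻¹ • Rplus n = Rplus n := by
    ext x
    rw [Set.mem_smul_set_iff_inv_smul_mem₀ hc'.ne']
    simp [Rplus, hc]
  rw [hset, Module.finrank_fintype_fun_eq_card, Fintype.card_fin, inv_pow, inv_inv] at h
  have h2 : ∫ x in Rplus n, (Wt n k s c 0 (c⁻¹ • x) : ℂ) * ψ (c⁻¹ • x) =
      (((c⁻¹) ^ (n * (s + k * (n - 1))) : ℝ) : ℂ) *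
        ∫ x in Rplus n, (Wt n k s 1 0 x : ℂ) * ψ (c⁻¹ • x) := by
    rw [← integral_const_mul]
    refine setIntegral_congr_fun (measurableSet_Rplus n) fun x hx => ?_
    rw [Wt_smul hc' hx, mul_inv_cancel₀ hc.ne']
    push_cast
    ring
  rw [h2] at h
  have h3 : c ^ (n * (s + 1 + k * (n - 1))) = c ^ (n * (s + k * (n - 1))) * c ^ n := by
    rw [← Real.rpow_natCast, ← Real.rpow_add hc]
    congr 1
    ring
  have h4 : c ^ (n * (s + k * (n - 1))) * (c⁻¹) ^ (n * (s + k * (n - 1))) = 1 := by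
    rw [← Real.mul_rpow hc.le hc'.le, mul_inv_cancel₀ hc.ne', Real.one_rpow]
  rw [Complex.real_smul] at h
  rw [h3, Complex.ofReal_mul, mul_assoc, ← h, ← mul_assoc, ← Complex.ofReal_mul, h4,
    Complex.ofReal_one, one_mul]

lemma laplace_tendsto_top {s : ℝ} (hk : 0 < k) (hs : 0 < s) (h0 : ψ 0 = 1) :
    Filter.Tendsto (fun c : ℝ => (((c ^ (n * (s + 1 + k * (n - 1))) : ℝ)) : ℂ) *
        ∫ x in Rplus n, (Wt n k s c 0 x : ℂ) * ψ x) Filter.atTop (nhds (SL n k s : ℂ)) := by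
  obtain ⟨C, hC0, hC, -⟩ := schwartz_bounds ψ
  have hm : Measurable ψ := ψ.continuous.measurable
  have h : Filter.Tendsto (fun c : ℝ => ∫ x in Rplus n, (Wt n k s 1 0 x : ℂ) * ψ (c⁻¹ • x))
      Filter.atTop (nhds (∫ x in Rplus n, (Wt n k s 1 0 x : ℂ) * 1)) := by
    refine tendsto_integral_filter_of_dominated_convergence (fun x => Wt n k s 1 0 x * C)
      (Filter.Eventually.of_forall fun c => Measurable.aestronglyMeasurable (by fun_prop))
      (Filter.Eventually.of_forall fun c =>
        (ae_restrict_iff' (measurableSet_Rplus n)).2 (ae_of_all _ fun x hx => ?_))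
      ((integrableOn_Wt n hk hs.le zero_lt_one).mul_const C) (ae_of_all _ fun x => ?_)
    · have hw := Wt_nonneg n k s 1 le_rfl hx
      rw [norm_mul, Complex.norm_of_nonneg hw]
      gcongr
      exact hC _
    · refine Filter.Tendsto.const_mul _ ?_
      rw [← h0]
      refine (ψ.continuous.tendsto 0).comp ?_
      have := (tendsto_inv_atTop_zero (𝕜 := ℝ)).smul_const x
      rwa [zero_smul] at this
  simp only [mul_one] at h
  rw [integral_complex_ofReal] at h
  refine h.congr' ?_
  filter_upwards [Filter.eventually_gt_atTop 0] with c hc using (laplace_scale hc).symm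

lemma exp_log_tendsto (z : Fin n → ℂ) (M : ℂ) :
    Filter.Tendsto (fun c : ℝ => Complex.exp (M * ∑ l, Complex.log (1 + z l / c)))
      Filter.atTop (nhds 1) := by
  have h1 : ∀ l, Filter.Tendsto (fun c : ℝ => Complex.log (1 + z l / c)) Filter.atTop (nhds 0) := by
    intro l
    have h2 : Filter.Tendsto (fun c : ℝ => 1 + z l / c) Filter.atTop (nhds 1) := by
      have h3 : Filter.Tendsto (fun c : ℝ => ((c⁻¹ : ℝ) : ℂ)) Filter.atTop (nhds ((0 : ℝ) : ℂ)) :=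
        (Complex.continuous_ofReal.tendsto 0).comp tendsto_inv_atTop_zero
      have h4 := (h3.const_mul (z l)).const_add 1
      simpa [div_eq_mul_inv] using h4
    have h5 := (continuousAt_clog (x := 1) (by simp)).tendsto.comp h2
    simpa [Function.comp_def] using h5
  have h6 := (tendsto_finsetSum univ fun l _ => h1 l).const_mul M
  have h7 := (Complex.continuous_exp.tendsto _).comp h6
  simpa [Function.comp_def] using h7

/-- The Laplace transform of the density `D^s ω_k`, evaluated through the constancy in `c` of the
damped integral times `∏ (z_l + c)^m`, compared at `c → 0` and `c → ∞`. -/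
lemma laplace_density {s : ℝ} (hk : 0 < k) (hs : 0 < s) (hz : ∀ i, 0 < (z i).re)
    (hT : ∀ x ∈ Rplus n, Function.Injective x → ∀ i, dunklOp n k i ψ x = -z i * ψ x)
    (h0 : ψ 0 = 1) :
    (∫ x in Rplus n, (Wt n k s 0 0 x : ℂ) * ψ x) *
        Complex.exp ((s + 1 + k * (n - 1)) * ∑ l, Complex.log (z l)) = SL n k s := by
  set M : ℂ := s + 1 + k * (n - 1) with hM
  have hlim0 : Filter.Tendsto (fun c : ℝ => (∫ x in Rplus n, (Wt n k s c 0 x : ℂ) * ψ x) *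
      Complex.exp (M * ∑ l, Complex.log (z l + c))) (nhdsWithin 0 (Set.Ioi 0))
      (nhds ((∫ x in Rplus n, (Wt n k s 0 0 x : ℂ) * ψ x) *
        Complex.exp (M * ∑ l, Complex.log (z l)))) := by
    refine (laplace_tendsto_zero hk hs).mul ?_
    have hc : ContinuousAt (fun c : ℝ => Complex.exp (M * ∑ l, Complex.log (z l + c))) 0 := by
      refine ContinuousAt.cexp (continuousAt_const.mul (tendsto_finsetSum _ fun l _ => ?_))
      refine ContinuousAt.clog (by fun_prop) (Or.inl ?_)
      simpa using hz l
    have := hc.tendsto.mono_left (nhdsWithin_le_nhds (s := Set.Ioi 0))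
    simpa using this
  have hlimT : Filter.Tendsto (fun c : ℝ => (∫ x in Rplus n, (Wt n k s c 0 x : ℂ) * ψ x) *
      Complex.exp (M * ∑ l, Complex.log (z l + c))) Filter.atTop (nhds (SL n k s : ℂ)) := by
    have := (laplace_tendsto_top (n := n) hk hs h0).mul (exp_log_tendsto z M)
    rw [mul_one] at this
    refine this.congr' ?_
    filter_upwards [Filter.eventually_gt_atTop 0] with c hc
    -- the arguments add up because `c > 0`
    have h1 : ∀ l, Complex.log (z l + c) = Real.log c + Complex.log (1 + z l / c) := by
      intro l
      have hc' : (c : ℂ) ≠ 0 := by exact_mod_cast hc.ne'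
      have e : z l + c = c * (1 + z l / c) := by field_simp; ring
      rw [e, Complex.log_ofReal_mul hc]
      intro h
      rw [h, mul_zero] at e
      have := congrArg Complex.re e
      simp at this
      linarith [hz l]
    have h2 : (((c ^ (n * (s + 1 + k * (n - 1))) : ℝ)) : ℂ) =
        Complex.exp (M * (n * (Real.log c : ℂ))) := by
      rw [Real.rpow_def_of_pos hc, Complex.ofReal_exp]
      congr 1
      rw [hM]
      push_cast
      ring
    simp_rw [h1]
    rw [h2, Finset.sum_add_distrib, Finset.sum_const, Finset.card_univ, Fintype.card_fin,
      nsmul_eq_mul, mul_add, Complex.exp_add]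
    ring
  have hconst := @laplace_mul_const n k z ψ s hk hs hz hT
  rw [← hM] at hconst
  refine (tendsto_nhds_unique (f := fun c : ℝ =>
    (∫ x in Rplus n, (Wt n k s 1 0 x : ℂ) * ψ x) *
      Complex.exp (M * ∑ l, Complex.log (z l + (1 : ℝ)))) (l := nhdsWithin (0 : ℝ) (Set.Ioi 0))
    (hlim0.congr' ?_) tendsto_const_nhds).trans
    (tendsto_nhds_unique (l := (Filter.atTop : Filter ℝ)) tendsto_const_nhds (hlimT.congr' ?_))
  · filter_upwards [self_mem_nhdsWithin] with c hc using hconst hc one_pos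
  · filter_upwards [Filter.eventually_gt_atTop 0] with c hc using hconst hc one_pos

end Laplace

/-! ### The Laplace transform of the Riesz distributions -/

section Final

variable {n : ℕ} {k : ℝ} {z : Fin n → ℂ} {ψ : SchwartzMap (Fin n → ℝ) ℂ}

/-- The Schwartz function inherits the eigenvalue equation at points of the open orthant: near
such a point it agrees with the Dunkl kernel, and reflections preserve the orthant. -/
lemma eigen_of_eqOn {E : (Fin n → ℝ) → (Fin n → ℂ) → ℂ} (hE : IsDunklKernel n k E)
    (hψ : ∃ U : Set (Fin n → ℝ), IsOpen U ∧ {x : Fin n → ℝ | ∀ i, 0 ≤ x i} ⊆ U ∧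
      ∀ x ∈ U, ψ x = E x (-z)) (x : Fin n → ℝ) (hx : x ∈ Rplus n) (hinj : Function.Injective x)
    (i : Fin n) : dunklOp n k i ψ x = -z i * ψ x := by
  obtain ⟨U, hU, hsub, heq⟩ := hψ
  have hxU : x ∈ U := hsub fun i => (hx i).le
  have h1 : ψ =ᶠ[nhds x] fun y => E y (-z) := by
    filter_upwards [hU.mem_nhds hxU] with y hy using heq y hy
  have h2 := hE.eigen (-z) i x hinj
  have h3 : dunklOp n k i ψ x = dunklOp n k i (fun y => E y (-z)) x := by
    unfold dunklOp
    rw [h1.fderiv_eq, heq x hxU]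
    congr 2
    refine Finset.sum_congr rfl fun j _ => ?_
    rw [heq (x ∘ Equiv.swap i j) (hsub fun l => (hx _).le)]
  rw [h3, h2, heq x hxU, Pi.neg_apply]

/-- The normalization of the Riesz distributions is the Selberg–Laguerre integral. -/
lemma dnk_mul_Gammank (hk : 0 < k) {s : ℝ} (hs : 0 < s) :
    (dnk n k : ℂ) * Gammank n k ((s + 1 + k * ((n : ℝ) - 1) : ℝ) : ℂ) = SL n k s := by
  rw [SL_eq n hk hs, Complex.ofReal_mul]
  congr 1
  unfold Gammank GP
  rw [Complex.ofReal_prod, ← Finset.prod_range_reflect]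
  refine Finset.prod_congr rfl fun j hj => ?_
  rw [← Complex.ofReal_sub, Complex.Gamma_ofReal]
  congr 2
  have hj' : j + 1 ≤ n := Finset.mem_range.1 hj
  rw [Nat.sub_sub, Nat.cast_sub (by omega)]
  push_cast
  ring

/-- The asserted formula for real `μ = s + 1 + k(n - 1)` with `s > 0`. -/
lemma riesz_laplace_real (hk : 0 < k) {R : ℂ → (SchwartzMap (Fin n → ℝ) ℂ →L[ℂ] ℂ)}
    (hR : IsRieszFamily n k R) (hz : ∀ i, 0 < (z i).re)
    (hT : ∀ x ∈ Rplus n, Function.Injective x → ∀ i, dunklOp n k i ψ x = -z i * ψ x)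
    (h0 : ψ 0 = 1) {s : ℝ} (hs : 0 < s) :
    R ((s + 1 + k * ((n : ℝ) - 1) : ℝ) : ℂ) ψ =
      ∏ j, (z j) ^ (-((s + 1 + k * ((n : ℝ) - 1) : ℝ) : ℂ)) := by
  have h1 := hR.2 ((s + 1 + k * ((n : ℝ) - 1) : ℝ) : ℂ) (by
    rw [Complex.ofReal_re]; linarith) ψ
  rw [dnk_mul_Gammank hk hs] at h1
  have h2 : ∫ x in Rplus n, ψ x * (∏ i, (x i : ℂ) ^ (((s + 1 + k * ((n : ℝ) - 1) : ℝ) : ℂ) -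
      ((k * ((n : ℝ) - 1) : ℝ) : ℂ) - 1)) * (wk n k x : ℂ) =
      ∫ x in Rplus n, (Wt n k s 0 0 x : ℂ) * ψ x := by
    refine setIntegral_congr_fun (measurableSet_Rplus n) fun x hx => ?_
    have e : ((s + 1 + k * ((n : ℝ) - 1) : ℝ) : ℂ) - ((k * ((n : ℝ) - 1) : ℝ) : ℂ) - 1 =
        (s : ℂ) := by
      push_cast
      ring
    simp only [e]
    unfold Wt
    rw [om_zero_eq_wk, neg_zero, zero_mul, Real.exp_zero, mul_one, Complex.ofReal_mul,
      Complex.ofReal_prod, Finset.prod_congr rfl fun i _ => Complex.ofReal_cpow (hx i).le s]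
    ring
  have hSL : (SL n k s : ℂ) ≠ 0 := by exact_mod_cast (SL_pos n hk hs.le).ne'
  have h3 := laplace_density hk hs hz hT h0
  rw [h1, h2, ← h3]
  have hI : (∫ x in Rplus n, (Wt n k s 0 0 x : ℂ) * ψ x) ≠ 0 := by
    intro h
    rw [h, zero_mul] at h3
    exact hSL h3.symm
  have hp : ∏ j, (z j) ^ (-((s + 1 + k * ((n : ℝ) - 1) : ℝ) : ℂ)) =
      (Complex.exp ((s + 1 + k * (n - 1)) * ∑ l, Complex.log (z l)))⁻¹ := by
    rw [← Complex.exp_neg, Finset.mul_sum, ← Finset.sum_neg_distrib, Complex.exp_sum]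
    refine Finset.prod_congr rfl fun j _ => ?_
    have hzj : z j ≠ 0 := fun h => by simpa [h] using hz j
    rw [Complex.cpow_def_of_ne_zero hzj]
    congr 1
    push_cast
    ring
  rw [hp, mul_inv, mul_right_comm, inv_mul_cancel₀ hI, one_mul]

end Final

/-- Laplace transform of the Riesz distributions: for `Re z_i > 0` and any
Schwartz `ψ` coinciding with `x ↦ E_k^A(x,-z)` on a neighborhood of `[0,∞)ⁿ`,
`⟨R_μ, ψ⟩ = ∏_j z_j^{-μ}` (principal powers). -/
theorem riesz_laplace_transform (n : ℕ) (hn : 2 ≤ n) (k : ℝ) (hk : 0 < k)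
    (E : (Fin n → ℝ) → (Fin n → ℂ) → ℂ) (hE : IsDunklKernel n k E)
    (R : ℂ → (SchwartzMap (Fin n → ℝ) ℂ →L[ℂ] ℂ)) (hR : IsRieszFamily n k R)
    (μ : ℂ) (z : Fin n → ℂ) (hz : ∀ i, 0 < (z i).re)
    (ψ : SchwartzMap (Fin n → ℝ) ℂ)
    (hψ : ∃ U : Set (Fin n → ℝ), IsOpen U ∧ {x : Fin n → ℝ | ∀ i, 0 ≤ x i} ⊆ U ∧
      ∀ x ∈ U, ψ x = E x (-z)) :
    R μ ψ = ∏ j, (z j) ^ (-μ) := by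
  have hT := eigen_of_eqOn hE hψ
  have h0 : ψ 0 = 1 := by
    obtain ⟨U, -, hsub, heq⟩ := hψ
    rw [heq 0 (hsub fun i => le_rfl), hE.eval_zero]
  have hf : AnalyticOnNhd ℂ (fun μ => R μ ψ) Set.univ :=
    (hR.1 ψ).differentiableOn.analyticOnNhd isOpen_univ
  have hg : AnalyticOnNhd ℂ (fun μ : ℂ => ∏ j, (z j) ^ (-μ)) Set.univ := by
    refine DifferentiableOn.analyticOnNhd (fun μ _ => ?_) isOpen_univ
    refine DifferentiableAt.differentiableWithinAt (DifferentiableAt.fun_finsetProd fun j _ => ?_)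
    have hzj : z j ≠ 0 := fun h => by simpa [h] using hz j
    exact DifferentiableAt.const_cpow differentiableAt_id.neg (Or.inl hzj)
  -- The two entire functions agree on a real half-line, which accumulates at its points.
  set r : ℝ := k * ((n : ℝ) - 1) + 2 with hr
  have h3 : Filter.Tendsto ((↑) : ℝ → ℂ) (nhdsWithin r {r}ᶜ) (nhdsWithin (r : ℂ) {(r : ℂ)}ᶜ) := by
    refine tendsto_nhdsWithin_iff.2 ⟨(Complex.continuous_ofReal.tendsto r).mono_left
      nhdsWithin_le_nhds, ?_⟩
    filter_upwards [self_mem_nhdsWithin] with t ht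
    simpa using ht
  have h4 : ∃ᶠ t : ℝ in nhdsWithin r {r}ᶜ, R (t : ℂ) ψ = ∏ j, (z j) ^ (-(t : ℂ)) := by
    refine Filter.Eventually.frequently (Filter.Eventually.filter_mono nhdsWithin_le_nhds ?_)
    filter_upwards [eventually_gt_nhds (show k * ((n : ℝ) - 1) + 1 < r by linarith)] with t ht
    have h5 := riesz_laplace_real hk hR hz hT h0 (s := t - 1 - k * ((n : ℝ) - 1)) (by linarith)
    have e : t - 1 - k * ((n : ℝ) - 1) + 1 + k * ((n : ℝ) - 1) = t := by ring
    rwa [e] at h5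
  exact congrFun (hf.eq_of_frequently_eq hg (h3.frequently h4)) μ
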